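/- arXiv:math/0703687 — 4 statements merged into one kernel-verified Lean document; each statement's English description precedes it below -/
import Mathlib

section
/- For all r in [0,1), K(r) > (9/(8+r²))·log(4/r'), where r' = √(1−r²). -/
noncomputable def ellK (r : ℝ) : ℝ :=
  ∫ θ in (0:ℝ)..(Real.pi/2), 1 / Real.sqrt (1 - r^2 * Real.sin θ ^ 2)

/-!
Put `m = r²` and `D(m) = (8 + m) K(√m) - 9 log (4 / √(1 - m))`. Both terms have explicit power
series in `m`, and the Wallis product shows that every coefficient of `D` from the quadratic one on
is nonpositive. Hence `D` is concave on `[0, 1)` and lies above the chord joining its value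
`4π - 9 log 4 > 0` at `m = 0` to its limit at `m = 1`. That limit is nonnegative because
`K(s) ≥ log 2 + artanh s`, which has the same logarithmic singularity at `s = 1` as `K`.
-/

open Real Filter Topology

section PowerSeries

variable {d : ℕ → ℝ}

theorem chord_le_of_hasSum (hd : ∀ n, d (n + 2) ≤ 0) {x y a b : ℝ} (hx : 0 ≤ x) (hxy : x ≤ y)
    (ha : HasSum (fun n => d n * x ^ n) a) (hb : HasSum (fun n => d n * y ^ n) b) :
    d 0 * (y - x) + x * b ≤ y * a := by
  have hsum := (hasSum_nat_add_iff' 2).2 ((ha.mul_left y).sub (hb.mul_left x))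
  have hterm (n : ℕ) : 0 ≤ y * (d (n + 2) * x ^ (n + 2)) - x * (d (n + 2) * y ^ (n + 2)) := by
    have hpow : x ^ (n + 1) ≤ y ^ (n + 1) := pow_le_pow_left₀ hx hxy _
    calc 0 ≤ x * y * (-d (n + 2) * (y ^ (n + 1) - x ^ (n + 1))) :=
          mul_nonneg (mul_nonneg hx (hx.trans hxy))
            (mul_nonneg (neg_nonneg.2 (hd n)) (sub_nonneg.2 hpow))
      _ = _ := by ring
  have hnonneg := hsum.nonneg hterm
  simp only [Finset.sum_range_succ, Finset.range_zero, Finset.sum_empty, pow_zero, pow_one]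
    at hnonneg
  linarith

theorem chord_le_of_hasSum_of_tendsto (hd : ∀ n, d (n + 2) ≤ 0) {f g : ℝ → ℝ} {l : ℝ}
    (hf : ∀ x ∈ Set.Ico 0 1, HasSum (fun n => d n * x ^ n) (f x))
    (hgf : ∀ᶠ x in 𝓝[<] 1, g x ≤ f x) (hg : Tendsto g (𝓝[<] 1) (𝓝 l))
    {x : ℝ} (hx : x ∈ Set.Ico 0 1) :
    d 0 * (1 - x) + x * l ≤ f x := by
  have hid : Tendsto id (𝓝[<] (1 : ℝ)) (𝓝 1) := tendsto_id.mono_left nhdsWithin_le_nhds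
  have hchord : ∀ᶠ y in 𝓝[<] 1, d 0 * (y - x) + x * g y ≤ y * f x := by
    filter_upwards [hgf, Ioo_mem_nhdsLT hx.2] with y hy hxy
    calc d 0 * (y - x) + x * g y ≤ d 0 * (y - x) + x * f y := by
          gcongr
          exact hx.1
      _ ≤ y * f x := chord_le_of_hasSum hd hx.1 hxy.1.le (hf x hx)
          (hf y ⟨hx.1.trans hxy.1.le, hxy.2⟩)
  simpa using le_of_tendsto_of_tendsto
    (((hid.sub_const x).const_mul (d 0)).add (hg.const_mul x)) (hid.mul_const (f x)) hchord

end PowerSeries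

/-- The Wallis ratio `(1 · 3 ⋯ (2n - 1)) / (2 · 4 ⋯ 2n)`, whose squares are the power series
coefficients of `(2 / π) K` in the squared modulus. -/
noncomputable def wallisRatio (n : ℕ) : ℝ :=
  ∏ i ∈ Finset.range n, (2 * (i : ℝ) + 1) / (2 * i + 2)

theorem wallisRatio_succ (n : ℕ) :
    wallisRatio (n + 1) = wallisRatio n * ((2 * (n : ℝ) + 1) / (2 * n + 2)) :=
  Finset.prod_range_succ _ _

theorem wallisRatio_nonneg (n : ℕ) : 0 ≤ wallisRatio n :=
  Finset.prod_nonneg fun _ _ => by positivity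

theorem wallisRatio_le_one (n : ℕ) : wallisRatio n ≤ 1 :=
  Finset.prod_le_one (fun _ _ => by positivity) fun _ _ =>
    div_le_one_of_le₀ (by linarith) (by positivity)

theorem wallisRatio_sq_mul_W (n : ℕ) :
    wallisRatio n ^ 2 * ((2 * n + 1) * Wallis.W n) = 1 := by
  induction n with
  | zero => simp [wallisRatio, Wallis.W]
  | succ n ih =>
    refine Eq.trans ?_ ih
    rw [wallisRatio_succ, Wallis.W_succ]
    push_cast
    field

theorem ascPochhammer_eval_one_half (n : ℕ) :
    (ascPochhammer ℝ n).eval (1 / 2) = n.factorial * wallisRatio n := by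
  induction n with
  | zero => simp [wallisRatio]
  | succ n ih =>
    rw [ascPochhammer_succ_eval, ih, wallisRatio_succ, Nat.factorial_succ]
    push_cast
    field

theorem ringChoose_eq_wallisRatio (n : ℕ) :
    Ring.choose ((1 / 2 : ℝ) + n - 1) n = wallisRatio n := by
  have h := Ring.factorial_nsmul_multichoose_eq_ascPochhammer (1 / 2 : ℝ) n
  rw [Polynomial.ascPochhammer_smeval_eq_eval, ascPochhammer_eval_one_half, nsmul_eq_mul] at h
  rw [← Ring.multichoose_eq]
  exact mul_left_cancel₀ (by positivity) h

theorem hasSum_wallisRatio_mul_pow {x : ℝ} (hx : |x| < 1) :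
    HasSum (fun n => wallisRatio n * x ^ n) (1 / √(1 - x)) := by
  have h := (one_div_one_sub_rpow_hasFPowerSeriesOnBall_zero (1 / 2)).hasSum
    (y := x) (by simpa [enorm_eq_nnnorm] using! hx)
  simpa only [ringChoose_eq_wallisRatio, zero_add, ← sqrt_eq_rpow,
    FormalMultilinearSeries.ofScalars_apply_eq, smul_eq_mul] using h

theorem integral_sin_pow_even_zero_pi_div_two (n : ℕ) :
    ∫ θ in (0 : ℝ)..π / 2, sin θ ^ (2 * n) = π / 2 * wallisRatio n := by
  have h := intervalIntegral.integral_comp_sub_left (a := 0) (b := π / 2)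
    (fun θ => cos θ ^ (2 * n)) (π / 2)
  simp only [cos_pi_div_two_sub, sub_self, sub_zero] at h
  rw [h, EulerSine.integral_cos_pow_eq, integral_sin_pow_even, wallisRatio]
  ring

theorem sq_mul_sin_sq_le (r θ : ℝ) : r ^ 2 * sin θ ^ 2 ≤ r ^ 2 :=
  mul_le_of_le_one_right (sq_nonneg r) (sin_sq_le_one θ)

theorem one_sub_sq_mul_sin_sq_pos {r : ℝ} (hr : r ^ 2 < 1) (θ : ℝ) :
    0 < 1 - r ^ 2 * sin θ ^ 2 :=
  sub_pos.2 ((sq_mul_sin_sq_le r θ).trans_lt hr)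

theorem hasSum_ellK {r : ℝ} (hr : r ^ 2 < 1) :
    HasSum (fun n => π / 2 * wallisRatio n ^ 2 * (r ^ 2) ^ n) (ellK r) := by
  have hbound (n : ℕ) (θ : ℝ) : ‖wallisRatio n * (r ^ 2 * sin θ ^ 2) ^ n‖ ≤ (r ^ 2) ^ n := by
    rw [norm_of_nonneg (mul_nonneg (wallisRatio_nonneg n) (by positivity))]
    exact (mul_le_of_le_one_left (by positivity) (wallisRatio_le_one n)).trans
      (pow_le_pow_left₀ (by positivity) (sq_mul_sin_sq_le r θ) n)
  have hpointwise (θ : ℝ) : HasSum (fun n => wallisRatio n * (r ^ 2 * sin θ ^ 2) ^ n)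
      (1 / √(1 - r ^ 2 * sin θ ^ 2)) := by
    refine hasSum_wallisRatio_mul_pow ?_
    rw [abs_of_nonneg (by positivity)]
    exact (sq_mul_sin_sq_le r θ).trans_lt hr
  have hcoeff (n : ℕ) : ∫ θ in (0 : ℝ)..π / 2, wallisRatio n * (r ^ 2 * sin θ ^ 2) ^ n =
      π / 2 * wallisRatio n ^ 2 * (r ^ 2) ^ n := by
    simp_rw [mul_pow, ← pow_mul (sin _)]
    rw [intervalIntegral.integral_const_mul, intervalIntegral.integral_const_mul,
      integral_sin_pow_even_zero_pi_div_two]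
    ring
  simp_rw [← hcoeff]
  exact intervalIntegral.hasSum_integral_of_dominated_convergence
    (fun n _ => (r ^ 2) ^ n) (fun n => by fun_prop) (fun n => .of_forall fun θ _ => hbound n θ)
    (.of_forall fun _ _ => summable_geometric_of_lt_one (sq_nonneg r) hr) (by simp)
    (.of_forall fun θ _ => hpointwise θ)

theorem arsinh_div_sqrt_one_sub_sq {s : ℝ} (hs : s ∈ Set.Ioo (-1) 1) :
    arsinh (s / √(1 - s ^ 2)) = artanh s := by
  rw [← sinh_artanh hs, arsinh_sinh]

theorem hasDerivAt_log_one_add_sin_sub_arsinh {s θ : ℝ} (hs : s ^ 2 < 1) (hθ : 1 + sin θ ≠ 0) :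
    HasDerivAt (fun θ => log (1 + sin θ) - arsinh (s * cos θ / √(1 - s ^ 2)))
      (cos θ / (1 + sin θ) + s * sin θ / √(1 - s ^ 2 * sin θ ^ 2)) θ := by
  have hlog := ((hasDerivAt_sin θ).const_add 1).log hθ
  have harsinh := (((hasDerivAt_cos θ).const_mul s).div_const √(1 - s ^ 2)).arsinh
  have hs' : 0 < 1 - s ^ 2 := sub_pos.2 hs
  have hsqrt : √(1 + (s * cos θ / √(1 - s ^ 2)) ^ 2) =
      √(1 - s ^ 2 * sin θ ^ 2) / √(1 - s ^ 2) := by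
    rw [← sqrt_div (one_sub_sq_mul_sin_sq_pos hs θ).le, div_pow, sq_sqrt hs'.le, mul_pow, cos_sq']
    congr 1
    field
  have hΔ := sqrt_pos.2 (one_sub_sq_mul_sin_sq_pos hs θ)
  refine (hlog.sub harsinh).congr_deriv ?_
  rw [hsqrt, smul_eq_mul]
  field

/-- The minorant is chosen to have an elementary antiderivative and to become exact as `s → 1`,
where both sides tend to `1 / cos θ`. -/
theorem cos_div_one_add_sin_add_le {s θ : ℝ} (hs : s ∈ Set.Ico 0 1) (hθ : 0 ≤ sin θ) :
    cos θ / (1 + sin θ) + s * sin θ / √(1 - s ^ 2 * sin θ ^ 2) ≤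
      1 / √(1 - s ^ 2 * sin θ ^ 2) := by
  have hΔ := one_sub_sq_mul_sin_sq_pos (pow_lt_one₀ hs.1 hs.2 two_ne_zero) θ
  have hsin : s * sin θ ≤ 1 := mul_le_one₀ hs.2.le hθ (sin_le_one θ)
  have hnonneg : 0 ≤ (1 - s * sin θ) * (1 + sin θ) :=
    mul_nonneg (by linarith) (by linarith)
  have hsq : (cos θ * √(1 - s ^ 2 * sin θ ^ 2)) ^ 2 ≤
      ((1 - s * sin θ) * (1 + sin θ)) ^ 2 := by
    rw [mul_pow, sq_sqrt hΔ.le, cos_sq', ← sub_nonneg]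
    calc 0 ≤ (1 - s * sin θ) * (1 + sin θ) * (2 * sin θ * (1 - s)) :=
          mul_nonneg hnonneg (mul_nonneg (by linarith) (by linarith [hs.2]))
      _ = _ := by ring
  rw [← le_sub_iff_add_le, ← sub_div, div_le_div_iff₀ (by linarith) (sqrt_pos.2 hΔ)]
  exact (abs_le_of_sq_le_sq' hsq hnonneg).2

theorem log_two_add_artanh_le_ellK {s : ℝ} (hs : s ∈ Set.Ico 0 1) :
    log 2 + artanh s ≤ ellK s := by
  have hs2 : s ^ 2 < 1 := pow_lt_one₀ hs.1 hs.2 two_ne_zero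
  have hsin : ∀ θ ∈ Set.Icc 0 (π / 2), 0 ≤ sin θ := fun θ hθ =>
    sin_nonneg_of_nonneg_of_le_pi hθ.1 (by linarith [hθ.2, pi_pos])
  have hcont : Continuous fun θ => 1 / √(1 - s ^ 2 * sin θ ^ 2) :=
    continuous_const.div (by fun_prop) fun θ =>
      (sqrt_pos.2 (one_sub_sq_mul_sin_sq_pos hs2 θ)).ne'
  have hderiv : ∀ θ ∈ Set.Icc 0 (π / 2), HasDerivAt _ _ θ := fun θ hθ =>
    hasDerivAt_log_one_add_sin_sub_arsinh hs2 (by linarith [hsin θ hθ])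
  have h := intervalIntegral.sub_le_integral_of_hasDeriv_right_of_le
    (by positivity : (0 : ℝ) ≤ π / 2)
    (fun θ hθ => (hderiv θ hθ).continuousAt.continuousWithinAt)
    (fun θ hθ => (hderiv θ (Set.Ioo_subset_Icc_self hθ)).hasDerivWithinAt)
    hcont.continuousOn.integrableOn_Icc
    (fun θ hθ => cos_div_one_add_sin_add_le hs (hsin θ (Set.Ioo_subset_Icc_self hθ)))
  simpa [ellK, one_add_one_eq_two,
    arsinh_div_sqrt_one_sub_sq ⟨by linarith [hs.1], hs.2⟩] using h

theorem log_two_add_artanh {s : ℝ} (hs : s ∈ Set.Ioo (-1) 1) :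
    log 2 + artanh s = log (4 / √(1 - s ^ 2)) + log ((1 + s) / 2) := by
  have hadd : 0 < 1 + s := by linarith [hs.1]
  have hsub : 0 < 1 - s := by linarith [hs.2]
  have hfactor : 1 - s ^ 2 = (1 + s) * (1 - s) := by ring
  rw [artanh_eq_half_log (Set.Ioo_subset_Icc_self hs), hfactor,
    log_div four_ne_zero (by positivity), log_sqrt (by positivity),
    log_mul hadd.ne' hsub.ne', log_div hadd.ne' hsub.ne', log_div hadd.ne' two_ne_zero,
    show (4 : ℝ) = 2 ^ 2 by norm_num, log_pow]
  push_cast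
  ring

/-- The difference `(8 + m) K(√m) - 9 log (4 / √(1 - m))`, as a function of the squared modulus
`m = r ^ 2`; its positivity is equivalent to the bound on `K`. -/
noncomputable def ellKGap (m : ℝ) : ℝ :=
  (8 + m) * ellK √m - 9 * log (4 / √(1 - m))

theorem le_ellKGap {m : ℝ} (hm : m ∈ Set.Ico 0 1) :
    9 * log ((1 + √m) / 2) - 4 * √(1 - m) ≤ ellKGap m := by
  have hs : √m ∈ Set.Ico 0 1 := ⟨sqrt_nonneg m, (sqrt_lt' one_pos).2 (by simpa using hm.2)⟩
  have hK := log_two_add_artanh_le_ellK hs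
  rw [log_two_add_artanh ⟨by linarith [hs.1], hs.2⟩, sq_sqrt hm.1] at hK
  have hm' : 0 < 1 - m := sub_pos.2 hm.2
  have hneg : log ((1 + √m) / 2) ≤ 0 :=
    log_nonpos (by linarith [hs.1]) (by linarith [hs.2])
  have hlog : (1 - m) * log (4 / √(1 - m)) ≤ 4 * √(1 - m) :=
    calc (1 - m) * log (4 / √(1 - m)) ≤ (1 - m) * (4 / √(1 - m)) := by
          gcongr
          exact log_le_self (by positivity)
      _ = 4 * √(1 - m) := by
          rw [mul_div_left_comm, div_sqrt]
  have hmulK := mul_le_mul_of_nonneg_left hK (by linarith [hm.1] : 0 ≤ 8 + m)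
  have hmulneg := mul_nonpos_of_nonneg_of_nonpos hm'.le hneg
  rw [ellKGap]
  linarith

theorem tendsto_log_sub_sqrt_one :
    Tendsto (fun m => 9 * log ((1 + √m) / 2) - 4 * √(1 - m)) (𝓝[<] 1) (𝓝 0) := by
  have h : ContinuousAt (fun m => 9 * log ((1 + √m) / 2) - 4 * √(1 - m)) 1 := by
    fun_prop (disch := norm_num)
  simpa [one_add_one_eq_two] using h.tendsto.mono_left nhdsWithin_le_nhds

/-- `n + 1` times the coefficient of `m ^ (n + 1)` in the power series of `(8 + m) (2 / π) K(√m)`;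
the factor `n + 1` makes it comparable with the coefficients of the logarithm. -/
noncomputable def ellKScaledCoeff (n : ℕ) : ℝ :=
  (n + 1) * (8 * wallisRatio (n + 1) ^ 2 + wallisRatio n ^ 2)

theorem ellKScaledCoeff_eq (n : ℕ) :
    ellKScaledCoeff n = wallisRatio n ^ 2 * ((9 * n ^ 2 + 10 * n + 3) / (n + 1)) := by
  rw [ellKScaledCoeff, wallisRatio_succ]
  field

theorem monotone_ellKScaledCoeff_succ : Monotone fun n => ellKScaledCoeff (n + 1) := by
  refine monotone_nat_of_le_succ fun n => ?_
  rw [ellKScaledCoeff_eq, ellKScaledCoeff_eq, wallisRatio_succ (n + 1), mul_pow, mul_assoc]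
  refine mul_le_mul_of_nonneg_left ?_ (sq_nonneg _)
  push_cast
  rw [div_pow, div_mul_div_comm, div_le_div_iff₀ (by positivity) (by positivity), ← sub_nonneg]
  ring_nf
  positivity

theorem tendsto_ellKScaledCoeff : Tendsto ellKScaledCoeff atTop (𝓝 (9 / π)) := by
  have heq (n : ℕ) : ellKScaledCoeff n =
      (9 - 8 * (1 / ((n : ℝ) + 1)) + 2 * (1 / ((n : ℝ) + 1)) ^ 2) / (2 - 1 / ((n : ℝ) + 1)) /
        Wallis.W n := by
    have hW := Wallis.W_pos n
    have hden : 2 - 1 / ((n : ℝ) + 1) = (2 * n + 1) / (n + 1) := by field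
    rw [ellKScaledCoeff_eq, eq_one_div_of_mul_eq_one_left (wallisRatio_sq_mul_W n), hden]
    field
  have hu := tendsto_one_div_add_atTop_nhds_zero_nat (𝕜 := ℝ)
  have hlim := (((hu.const_mul 8).const_sub 9).add ((hu.pow 2).const_mul 2)).div
    (hu.const_sub 2) (by norm_num) |>.div Wallis.tendsto_W_nhds_pi_div_two (by positivity)
  convert hlim using 1
  · exact funext heq
  · congr 1
    field

theorem ellKScaledCoeff_succ_le (n : ℕ) : ellKScaledCoeff (n + 1) ≤ 9 / π :=
  monotone_ellKScaledCoeff_succ.ge_of_tendsto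
    ((tendsto_add_atTop_iff_nat 1).2 tendsto_ellKScaledCoeff) n

/-- The power series coefficients of `ellKGap`. -/
noncomputable def ellKGapCoeff : ℕ → ℝ
  | 0 => 4 * π - 9 * log 4
  | n + 1 => (π / 2 * ellKScaledCoeff n - 9 / 2) / (n + 1)

theorem ellKGapCoeff_zero_pos : 0 < ellKGapCoeff 0 := by
  have hlog : log 4 = 2 * log 2 := by
    rw [show (4 : ℝ) = 2 ^ 2 by norm_num, log_pow, Nat.cast_ofNat]
  rw [ellKGapCoeff, hlog]
  linarith [log_two_lt_d9, pi_gt_d2]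

theorem ellKGapCoeff_add_two_nonpos (n : ℕ) : ellKGapCoeff (n + 2) ≤ 0 := by
  have h := (le_div_iff₀ pi_pos).1 (ellKScaledCoeff_succ_le n)
  exact div_nonpos_of_nonpos_of_nonneg (by linarith) (by positivity)

theorem hasSum_ellKGap {m : ℝ} (hm : m ∈ Set.Ico 0 1) :
    HasSum (fun n => ellKGapCoeff n * m ^ n) (ellKGap m) := by
  have hm' : 0 < 1 - m := sub_pos.2 hm.2
  have hK := hasSum_ellK (r := √m) (by rw [sq_sqrt hm.1]; exact hm.2)
  rw [sq_sqrt hm.1] at hK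
  have hlog := hasSum_pow_div_log_of_abs_lt_one (x := m) (by rw [abs_of_nonneg hm.1]; exact hm.2)
  have hKtail := (hasSum_nat_add_iff' 1).2 hK
  rw [← hasSum_nat_add_iff' 1]
  convert ((hKtail.mul_left 8).add (hK.mul_left m)).sub (hlog.mul_left (9 / 2)) using 1
  · ext n
    rw [ellKGapCoeff, ellKScaledCoeff]
    field
  · rw [ellKGap, log_div four_ne_zero (sqrt_pos.2 hm').ne', log_sqrt hm'.le]
    simp only [Finset.sum_range_one, ellKGapCoeff, wallisRatio, Finset.range_zero,
      Finset.prod_empty, pow_zero]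
    ring

theorem chord_le_ellKGap {m : ℝ} (hm : m ∈ Set.Ico 0 1) :
    ellKGapCoeff 0 * (1 - m) ≤ ellKGap m := by
  have hlower : ∀ᶠ x in 𝓝[<] (1 : ℝ), 9 * log ((1 + √x) / 2) - 4 * √(1 - x) ≤ ellKGap x := by
    filter_upwards [Ico_mem_nhdsLT one_pos] with x hx using le_ellKGap hx
  simpa using chord_le_of_hasSum_of_tendsto ellKGapCoeff_add_two_nonpos
    (fun _ => hasSum_ellKGap) hlower tendsto_log_sub_sqrt_one hm

theorem ellK_abs (r : ℝ) : ellK |r| = ellK r := by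
  simp only [ellK, sq_abs]

theorem ellK_lower_general {r : ℝ} (hr : |r| < 1) :
    9 / (8 + r ^ 2) * log (4 / √(1 - r ^ 2)) < ellK r := by
  have hr2 : r ^ 2 ∈ Set.Ico 0 1 := ⟨sq_nonneg r, (sq_lt_one_iff_abs_lt_one r).2 hr⟩
  have hgap : 0 < ellKGap (r ^ 2) :=
    (mul_pos ellKGapCoeff_zero_pos (sub_pos.2 hr2.2)).trans_le (chord_le_ellKGap hr2)
  rw [ellKGap, sqrt_sq_eq_abs, ellK_abs, sub_pos] at hgap
  rwa [div_mul_eq_mul_div, div_lt_iff₀' (by positivity)]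

theorem ellK_lower (r : ℝ) (hr : r ∈ Set.Ico (0:ℝ) 1) :
    ellK r > (9 / (8 + r^2)) * Real.log (4 / Real.sqrt (1 - r^2)) :=
  ellK_lower_general (abs_lt.2 ⟨by linarith [hr.1], hr.2⟩)
end

section
/- For all r in [0,1), K(r) < (4/(3+r²))·log(4/r'), where r' = √(1−r²). -/
/-! Write `k = √(1 - r²)` and `s = √(1 + k)`. Splitting the integral where `tan θ = 1 / √k` and
putting `tan θ = u` below and `cot θ = k u` above exhibits `K(r)` as twice the integral of
`1 / √((1 + u²) (1 + k² u²))` over `[0, 1 / √k]`. There `k² u² ≤ k`, so bounding the convex function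
`y ↦ 1 / √(1 + y)` by its chord over `[0, k]` gives `K(r) ≤ (1 + k (s - 1) / (2 s)) A - (s - 1)`
with `A = 2 arsinh (1 / √k)`. Since `A - log (4 / k) = 2 log ((1 + s) / 2) < s - 1`, it is enough
that `1 - k² / 4` times this bound is at most `A - (s - 1)`. As `A ≥ 1`, this follows from
`1 - (1 - k² / 4) (1 + k (s - 1) / (2 s)) ≥ k² (s - 1) / 4`.
-/

open Real

/-- The integrand of the complete elliptic integral in the form of Gauss; its integral over
`[0, π / 2]` is `π / (2 M)` for `M` the arithmetic-geometric mean of `a` and `b`. Unlike the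
modulus form it is symmetric in its parameters up to `θ ↦ π / 2 - θ`. -/
noncomputable def gaussIntegrand (a b θ : ℝ) : ℝ :=
  1 / √(a ^ 2 * cos θ ^ 2 + b ^ 2 * sin θ ^ 2)

theorem ellK_eq_integral_gaussIntegrand {r : ℝ} (hr : |r| ≤ 1) :
    ellK r = ∫ θ in (0 : ℝ)..π / 2, gaussIntegrand 1 √(1 - r ^ 2) θ := by
  have hr' : 0 ≤ 1 - r ^ 2 := sub_nonneg.2 ((sq_le_one_iff_abs_le_one r).2 hr)
  refine intervalIntegral.integral_congr fun θ _ => ?_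
  simp only [gaussIntegrand, sq_sqrt hr', cos_sq' θ]
  ring_nf

theorem continuous_gaussIntegrand {a b : ℝ} (ha : a ≠ 0) (hb : b ≠ 0) :
    Continuous (gaussIntegrand a b) := by
  refine continuous_const.div (by fun_prop) fun θ => (sqrt_pos.2 ?_).ne'
  rcases eq_or_ne (cos θ) 0 with hcos | hcos
  · have hsin : sin θ ^ 2 = 1 := by simpa [hcos] using sin_sq_add_cos_sq θ
    rw [hsin]
    positivity
  · positivity

theorem gaussIntegrand_pi_div_two_sub (a b θ : ℝ) :
    gaussIntegrand a b (π / 2 - θ) = gaussIntegrand b a θ := by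
  simp only [gaussIntegrand, cos_pi_div_two_sub, sin_pi_div_two_sub, add_comm]

theorem gaussIntegrand_arctan_mul_deriv {a : ℝ} (ha : 0 < a) (b u : ℝ) :
    gaussIntegrand a b (arctan (a * u)) * (a / (1 + (a * u) ^ 2)) =
      1 / √((1 + (a * u) ^ 2) * (1 + (b * u) ^ 2)) := by
  have hquad : a ^ 2 * cos (arctan (a * u)) ^ 2 + b ^ 2 * sin (arctan (a * u)) ^ 2 =
      a ^ 2 * (1 + (b * u) ^ 2) / (1 + (a * u) ^ 2) := by
    rw [cos_sq_arctan, sin_sq_arctan]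
    ring
  have hsq : √(1 + (a * u) ^ 2) ^ 2 = 1 + (a * u) ^ 2 := sq_sqrt (by positivity)
  rw [gaussIntegrand, hquad, sqrt_div (by positivity), sqrt_mul (by positivity), sqrt_sq ha.le,
    sqrt_mul (by positivity)]
  field_simp
  simpa only [mul_pow] using hsq

theorem integral_gaussIntegrand_arctan {a b : ℝ} (ha : 0 < a) (hb : b ≠ 0) (x : ℝ) :
    ∫ θ in (0 : ℝ)..arctan (a * x), gaussIntegrand a b θ =
      ∫ u in (0 : ℝ)..x, 1 / √((1 + (a * u) ^ 2) * (1 + (b * u) ^ 2)) := by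
  have hderiv (u : ℝ) : HasDerivAt (fun u => arctan (a * u)) (a / (1 + (a * u) ^ 2)) u :=
    ((hasDerivAt_id u).const_mul a).arctan.congr_deriv (by simp [div_eq_inv_mul])
  have hcont : Continuous fun u => a / (1 + (a * u) ^ 2) :=
    continuous_const.div (by fun_prop) fun u => by positivity
  have hsubst := intervalIntegral.integral_comp_mul_deriv (a := 0) (b := x)
    (fun u _ => hderiv u) hcont.continuousOn (continuous_gaussIntegrand ha.ne' hb)
  simpa only [mul_zero, arctan_zero, Function.comp_apply, gaussIntegrand_arctan_mul_deriv ha]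
    using hsubst.symm

theorem integral_gaussIntegrand_eq_two_mul {a b : ℝ} (ha : 0 < a) (hb : 0 < b) :
    ∫ θ in (0 : ℝ)..π / 2, gaussIntegrand a b θ =
      2 * ∫ u in (0 : ℝ)..(√(a * b))⁻¹, 1 / √((1 + (a * u) ^ 2) * (1 + (b * u) ^ 2)) := by
  set x := (√(a * b))⁻¹
  have hinv : (a * x)⁻¹ = b * x := by
    have hsq : √(a * b) ^ 2 = a * b := sq_sqrt (by positivity)
    simp only [x]
    field_simp
    exact hsq
  have harctan : π / 2 - arctan (a * x) = arctan (b * x) := by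
    rw [← hinv, arctan_inv_of_pos (by positivity)]
  have hupper : ∫ θ in arctan (a * x)..π / 2, gaussIntegrand a b θ =
      ∫ θ in (0 : ℝ)..arctan (b * x), gaussIntegrand b a θ := by
    simp only [← gaussIntegrand_pi_div_two_sub a b, intervalIntegral.integral_comp_sub_left,
      ← harctan, sub_sub_cancel, sub_zero]
  have hint (p q : ℝ) : IntervalIntegrable (gaussIntegrand a b) MeasureTheory.volume p q :=
    (continuous_gaussIntegrand ha.ne' hb.ne').intervalIntegrable p q
  rw [← intervalIntegral.integral_add_adjacent_intervals (hint 0 (arctan (a * x))) (hint _ _),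
    hupper, integral_gaussIntegrand_arctan ha hb.ne', integral_gaussIntegrand_arctan hb ha.ne',
    two_mul]
  simp only [mul_comm]

theorem one_div_sqrt_one_add_le_chord {y h : ℝ} (hy : 0 ≤ y) (hyh : y ≤ h) :
    1 / √(1 + y) ≤ 1 - y / (√(1 + h) * (√(1 + h) + 1)) := by
  have hps : √(1 + y) ≤ √(1 + h) := sqrt_le_sqrt (by linarith)
  have hy_eq : y = (√(1 + y) - 1) * (√(1 + y) + 1) := by
    linear_combination -sq_sqrt (show 0 ≤ 1 + y by linarith)
  calc 1 / √(1 + y)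
      = 1 - y / (√(1 + y) * (√(1 + y) + 1)) := by
        nth_rw 2 [hy_eq]
        field_simp
        ring
    _ ≤ 1 - y / (√(1 + h) * (√(1 + h) + 1)) := by gcongr

theorem integral_one_sub_mul_sq_div_sqrt_one_add_sq (c x : ℝ) :
    ∫ u in (0 : ℝ)..x, (1 - c * u ^ 2) / √(1 + u ^ 2) =
      (1 + c / 2) * arsinh x - c / 2 * (x * √(1 + x ^ 2)) := by
  have hderiv (u : ℝ) : HasDerivAt
      (fun u => (1 + c / 2) * arsinh u - c / 2 * (u * √(1 + u ^ 2)))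
      ((1 - c * u ^ 2) / √(1 + u ^ 2)) u := by
    have hpos : 0 < 1 + u ^ 2 := by positivity
    have hsqrt : HasDerivAt (fun u : ℝ => √(1 + u ^ 2)) (2 * u / (2 * √(1 + u ^ 2))) u := by
      simpa using ((hasDerivAt_pow 2 u).const_add 1).sqrt hpos.ne'
    refine (((hasDerivAt_arsinh u).const_mul (1 + c / 2)).sub
      (((hasDerivAt_id u).mul hsqrt).const_mul (c / 2))).congr_deriv ?_
    have hsq : √(1 + u ^ 2) ^ 2 = 1 + u ^ 2 := sq_sqrt hpos.le
    simp only [id_eq]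
    field_simp
    rw [hsq]
    ring
  have hcont : Continuous fun u : ℝ => (1 - c * u ^ 2) / √(1 + u ^ 2) :=
    Continuous.div (by fun_prop) (by fun_prop) fun u => by positivity
  rw [intervalIntegral.integral_eq_sub_of_hasDerivAt (fun u _ => hderiv u)
    (hcont.intervalIntegrable 0 x)]
  simp

theorem sqrt_one_add_inv_sqrt_sq {k : ℝ} (hk : 0 < k) :
    √(1 + (√k)⁻¹ ^ 2) = √(1 + k) / √k := by
  rw [← sqrt_div (by positivity), inv_pow, sq_sqrt hk.le]
  congr 1
  field_simp
  ring

theorem two_mul_arsinh_inv_sqrt {k : ℝ} (hk : 0 < k) :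
    2 * arsinh (√k)⁻¹ = log (4 / k) + 2 * log ((√(1 + k) + 1) / 2) := by
  have hsq : √k ^ 2 = k := sq_sqrt hk.le
  have harg : ((√k)⁻¹ + √(1 + k) / √k) ^ 2 = 4 / k * ((√(1 + k) + 1) / 2) ^ 2 := by
    field_simp
    rw [hsq]
    ring
  calc 2 * arsinh (√k)⁻¹ = log (((√k)⁻¹ + √(1 + k) / √k) ^ 2) := by
        rw [arsinh, sqrt_one_add_inv_sqrt_sq hk, log_pow, Nat.cast_ofNat]
    _ = log (4 / k) + 2 * log ((√(1 + k) + 1) / 2) := by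
        rw [harg, log_mul (by positivity) (by positivity), log_pow, Nat.cast_ofNat]

theorem two_mul_arsinh_inv_sqrt_lt {k : ℝ} (hk : 0 < k) :
    2 * arsinh (√k)⁻¹ < log (4 / k) + (√(1 + k) - 1) := by
  have hs : 1 < √(1 + k) := by simpa [lt_sqrt] using hk
  have hlog : log ((√(1 + k) + 1) / 2) < (√(1 + k) + 1) / 2 - 1 :=
    log_lt_sub_one_of_pos (by positivity) (by linarith)
  rw [two_mul_arsinh_inv_sqrt hk]
  linarith

theorem one_le_two_mul_arsinh_inv_sqrt {k : ℝ} (hk : 0 < k) (hk1 : k ≤ 1) :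
    1 ≤ 2 * arsinh (√k)⁻¹ := by
  have hlog : 1 ≤ log (4 / k) := by
    rw [le_log_iff_exp_le (by positivity)]
    have hdiv : 4 ≤ 4 / k := le_div_self (by norm_num) hk hk1
    linarith [exp_one_lt_three]
  have hs : 1 ≤ √(1 + k) := one_le_sqrt.2 (by linarith)
  have hlog_nonneg : 0 ≤ log ((√(1 + k) + 1) / 2) := log_nonneg (by linarith)
  rw [two_mul_arsinh_inv_sqrt hk]
  linarith

theorem one_div_sqrt_mul_le_of_sq_le {h k u : ℝ} (hku : (k * u) ^ 2 ≤ h) :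
    1 / √((1 + u ^ 2) * (1 + (k * u) ^ 2)) ≤
      (1 - k ^ 2 / (√(1 + h) * (√(1 + h) + 1)) * u ^ 2) / √(1 + u ^ 2) := by
  calc 1 / √((1 + u ^ 2) * (1 + (k * u) ^ 2))
      = 1 / √(1 + (k * u) ^ 2) / √(1 + u ^ 2) := by
        rw [sqrt_mul (by positivity), div_div, mul_comm]
    _ ≤ (1 - (k * u) ^ 2 / (√(1 + h) * (√(1 + h) + 1))) / √(1 + u ^ 2) := by
        gcongr
        exact one_div_sqrt_one_add_le_chord (sq_nonneg _) hku
    _ = (1 - k ^ 2 / (√(1 + h) * (√(1 + h) + 1)) * u ^ 2) / √(1 + u ^ 2) := by ring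

theorem integral_one_div_sqrt_mul_le {h k x : ℝ} (hx : 0 ≤ x) (hkx : (k * x) ^ 2 ≤ h) :
    ∫ u in (0 : ℝ)..x, 1 / √((1 + u ^ 2) * (1 + (k * u) ^ 2)) ≤
      (1 + k ^ 2 / (√(1 + h) * (√(1 + h) + 1)) / 2) * arsinh x -
        k ^ 2 / (√(1 + h) * (√(1 + h) + 1)) / 2 * (x * √(1 + x ^ 2)) := by
  rw [← integral_one_sub_mul_sq_div_sqrt_one_add_sq]
  refine intervalIntegral.integral_mono_on hx
    (Continuous.intervalIntegrable (.div (by fun_prop) (by fun_prop) fun u => by positivity) 0 x)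
    (Continuous.intervalIntegrable (.div (by fun_prop) (by fun_prop) fun u => by positivity) 0 x)
    fun u hu => one_div_sqrt_mul_le_of_sq_le (hkx.trans' ?_)
  have hu_nonneg : 0 ≤ u := hu.1
  rw [mul_pow, mul_pow]
  gcongr
  exact hu.2

theorem integral_gaussIntegrand_one_le {k : ℝ} (hk : 0 < k) :
    ∫ θ in (0 : ℝ)..π / 2, gaussIntegrand 1 k θ ≤
      (1 + k * (√(1 + k) - 1) / (2 * √(1 + k))) * (2 * arsinh (√k)⁻¹) - (√(1 + k) - 1) := by
  set s := √(1 + k) with hs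
  set x := (√k)⁻¹ with hx
  have hs_pos : 0 < s := sqrt_pos.2 (by positivity)
  have hs_sq : s ^ 2 = 1 + k := sq_sqrt (by positivity)
  have hk_sq : √k ^ 2 = k := sq_sqrt hk.le
  have hkx : (k * x) ^ 2 = k := by
    rw [hx, mul_pow, inv_pow, hk_sq]
    field_simp
  have hslope : k ^ 2 / (s * (s + 1)) = k * (s - 1) / s := by
    field_simp
    linear_combination -hs_sq
  have hendpoint : k * (s - 1) / s * (x * √(1 + x ^ 2)) = s - 1 := by
    rw [sqrt_one_add_inv_sqrt_sq hk, ← hs, hx]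
    field_simp
    rw [hk_sq, mul_comm]
  calc ∫ θ in (0 : ℝ)..π / 2, gaussIntegrand 1 k θ
      = 2 * ∫ u in (0 : ℝ)..x, 1 / √((1 + u ^ 2) * (1 + (k * u) ^ 2)) := by
        simpa only [one_mul] using integral_gaussIntegrand_eq_two_mul one_pos hk
    _ ≤ 2 * ((1 + k * (s - 1) / s / 2) * arsinh x -
          k * (s - 1) / s / 2 * (x * √(1 + x ^ 2))) := by
        rw [← hslope]
        gcongr
        exact integral_one_div_sqrt_mul_le (by positivity) hkx.le
    _ = (1 + k * (s - 1) / (2 * s)) * (2 * arsinh x) - (s - 1) := by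
        linear_combination -hendpoint

theorem one_sub_sq_div_four_mul_le {A k s : ℝ} (hA : 1 ≤ A) (hk1 : k ≤ 1) (hs : 1 ≤ s)
    (hs_sq : s ^ 2 = 1 + k) :
    (1 - k ^ 2 / 4) * ((1 + k * (s - 1) / (2 * s)) * A - (s - 1)) ≤ A - (s - 1) := by
  have hk0 : 0 ≤ k := by linarith [one_le_pow₀ hs (n := 2)]
  have hgap : 0 ≤ 1 - (1 - k ^ 2 / 4) * (1 + k * (s - 1) / (2 * s)) - k ^ 2 / 4 * (s - 1) := by
    calc 0 ≤ k * (s - 1) / (2 * s) * ((s - 1) * (1 - k) / 2 + k ^ 2 / 4) := by positivity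
      _ = 1 - (1 - k ^ 2 / 4) * (1 + k * (s - 1) / (2 * s)) - k ^ 2 / 4 * (s - 1) := by
        obtain rfl : k = s ^ 2 - 1 := by linarith
        field_simp
        ring
  have hcoeff : 0 ≤ 1 - (1 - k ^ 2 / 4) * (1 + k * (s - 1) / (2 * s)) := by
    have : 0 ≤ k ^ 2 / 4 * (s - 1) := by positivity
    linarith
  linarith [mul_le_mul_of_nonneg_left hA hcoeff]

theorem ellK_upper_general {r : ℝ} (hr : |r| < 1) :
    ellK r < (4 / (3 + r ^ 2)) * log (4 / √(1 - r ^ 2)) := by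
  have hr_sq : r ^ 2 < 1 := (sq_lt_one_iff_abs_lt_one r).2 hr
  set k := √(1 - r ^ 2)
  have hk : 0 < k := sqrt_pos.2 (sub_pos.2 hr_sq)
  have hk1 : k ≤ 1 := sqrt_le_one.2 (by linarith [sq_nonneg r])
  have hk_sq : k ^ 2 = 1 - r ^ 2 := sq_sqrt (sub_nonneg.2 hr_sq.le)
  set s := √(1 + k)
  set A := 2 * arsinh (√k)⁻¹
  have hfactor : (3 + r ^ 2) / 4 = 1 - k ^ 2 / 4 := by rw [hk_sq]; ring
  have hfactor_pos : 0 < 1 - k ^ 2 / 4 := by rw [← hfactor]; positivity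
  rw [← inv_div, hfactor, lt_inv_mul_iff₀ hfactor_pos]
  calc (1 - k ^ 2 / 4) * ellK r
      ≤ (1 - k ^ 2 / 4) * ((1 + k * (s - 1) / (2 * s)) * A - (s - 1)) := by
        rw [ellK_eq_integral_gaussIntegrand hr.le]
        gcongr
        exact integral_gaussIntegrand_one_le hk
    _ ≤ A - (s - 1) :=
        one_sub_sq_div_four_mul_le (one_le_two_mul_arsinh_inv_sqrt hk hk1) hk1
          (one_le_sqrt.2 (by linarith)) (sq_sqrt (by positivity))
    _ < log (4 / k) := by linarith [two_mul_arsinh_inv_sqrt_lt hk]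

theorem ellK_upper (r : ℝ) (hr : r ∈ Set.Ico (0:ℝ) 1) :
    ellK r < (4 / (3 + r^2)) * Real.log (4 / Real.sqrt (1 - r^2)) :=
  ellK_upper_general (by rw [abs_of_nonneg hr.1]; exact hr.2)
end

section
/- The function r ↦ μ(r) + log r is monotone decreasing on (0,1), where μ(r) = (π/2)·K(r')/K(r) with r' = √(1−r²). -/
noncomputable def mu (r : ℝ) : ℝ :=
  (Real.pi/2) * ellK (Real.sqrt (1 - r^2)) / ellK r

/-!
Since `(μ + log)'(r) = 1 / r - π² / (4 r (1 - r²) K(r)²)`, the theorem amounts to the bound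
`√(1 - r²) K(r) < π / 2`, which holds pointwise under the integral sign. In the quotient rule for
`K(r') / K(r)`, the numerator reduces to `E K' + E' K - K K'` up to a factor; by Legendre's relation
this is `π / 2`, because its derivative vanishes and it tends to `π / 2` as `r → 0`. The derivatives
of `K` and `E` both come from the family `∫₀^{π/2} (1 - m sin²θ)^a dθ` with `m = r²`:
differentiation in `m` lowers `a` by one, and a three-term recurrence in `a` leads back to
`a = ±1/2`.
-/

open Real Set Filter Topology MeasureTheory

theorem hasDerivAt_intervalIntegral_of_continuousOn {𝕜 E : Type*} [RCLike 𝕜]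
    [NormedAddCommGroup E] [NormedSpace ℝ E] [NormedSpace 𝕜 E]
    {μ : Measure ℝ} [IsLocallyFiniteMeasure μ]
    {f f' : 𝕜 → ℝ → E} {s : Set 𝕜} {a b : ℝ} (hs : IsOpen s)
    (hf : ∀ x ∈ s, ContinuousOn (f x) (uIcc a b))
    (hf' : ContinuousOn (Function.uncurry f') (s ×ˢ uIcc a b))
    (hderiv : ∀ x ∈ s, ∀ t ∈ uIcc a b, HasDerivAt (fun y => f y t) (f' x t) x) {x : 𝕜}
    (hx : x ∈ s) :
    HasDerivAt (fun y => ∫ t in a..b, f y t ∂μ) (∫ t in a..b, f' x t ∂μ) x := by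
  obtain ⟨ε, hε, hball⟩ := Metric.nhds_basis_closedBall.mem_iff.1 (hs.mem_nhds hx)
  obtain ⟨C, hC⟩ := ((isCompact_closedBall x ε).prod isCompact_uIcc).exists_bound_of_continuousOn
    (hf'.mono (prod_mono_left hball))
  have hmeas {g : ℝ → E} (hg : ContinuousOn g (uIcc a b)) :
      AEStronglyMeasurable g (μ.restrict (uIoc a b)) :=
    (hg.mono uIoc_subset_uIcc).aestronglyMeasurable measurableSet_uIoc
  have hf'x : ContinuousOn (f' x) (uIcc a b) :=
    hf'.comp (f := fun t => (x, t)) (by fun_prop) fun t ht => ⟨hx, ht⟩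
  refine (intervalIntegral.hasDerivAt_integral_of_dominated_loc_of_deriv_le (bound := fun _ => C)
    (Metric.closedBall_mem_nhds x hε) ?_ (hf x hx).intervalIntegrable (hmeas hf'x) ?_
    intervalIntegrable_const ?_).2
  · filter_upwards [hs.mem_nhds hx] with y hy using hmeas (hf y hy)
  · exact ae_of_all _ fun t ht y hy => hC (y, t) ⟨hy, uIoc_subset_uIcc ht⟩
  · exact ae_of_all _ fun t ht y hy => hderiv y (hball hy) t (uIoc_subset_uIcc ht)

/-- The complete elliptic integrals `∫₀^{π/2} (1 - m sin²θ)^a dθ` as a family in the exponent `a`,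
so that differentiation in `m` shifts `a` by one. The variable is the parameter `m = r²` rather
than the modulus `r`, which turns the complementary modulus `√(1 - r²)` into `1 - m`. -/
noncomputable def ellipticIntegral (a m : ℝ) : ℝ :=
  ∫ θ in (0:ℝ)..(π / 2), (1 - m * sin θ ^ 2) ^ a

/-- The complete elliptic integral of the first kind, as a function of the parameter `m = r²`. -/
noncomputable def ellipticK (m : ℝ) : ℝ := ellipticIntegral (-1 / 2) m

/-- The complete elliptic integral of the second kind, as a function of the parameter `m = r²`. -/
noncomputable def ellipticE (m : ℝ) : ℝ := ellipticIntegral (1 / 2) m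

section EllipticIntegral

variable {m : ℝ}

theorem one_sub_mul_sin_sq_pos (hm : m < 1) (θ : ℝ) : 0 < 1 - m * sin θ ^ 2 := by
  rcases le_or_gt m 0 with hm0 | hm0
  · nlinarith [sq_nonneg (sin θ)]
  · nlinarith [sin_sq_le_one θ]

theorem continuous_one_sub_mul_sin_sq_rpow (hm : m < 1) (a : ℝ) :
    Continuous fun θ => (1 - m * sin θ ^ 2) ^ a :=
  Continuous.rpow_const (by fun_prop) fun θ => .inl (one_sub_mul_sin_sq_pos hm θ).ne'

theorem intervalIntegrable_one_sub_mul_sin_sq_rpow (hm : m < 1) (a b c : ℝ) :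
    IntervalIntegrable (fun θ => (1 - m * sin θ ^ 2) ^ a) volume b c :=
  (continuous_one_sub_mul_sin_sq_rpow hm a).intervalIntegrable b c

theorem ellipticIntegral_zero_right (a : ℝ) : ellipticIntegral a 0 = π / 2 := by
  simp [ellipticIntegral]

theorem ellipticIntegral_pos (hm : m < 1) (a : ℝ) : 0 < ellipticIntegral a m :=
  intervalIntegral.intervalIntegral_pos_of_pos (intervalIntegrable_one_sub_mul_sin_sq_rpow hm a _ _)
    (fun θ => rpow_pos_of_pos (one_sub_mul_sin_sq_pos hm θ) a) (by positivity)

theorem ellipticIntegral_lt {a : ℝ} (ha : a < 0) (h0 : 0 < m) (h1 : m < 1) :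
    ellipticIntegral a m < π / 2 * (1 - m) ^ a := by
  have h1' : 0 < 1 - m := sub_pos.2 h1
  have hconst : ∫ _ in (0:ℝ)..(π / 2), (1 - m) ^ a = π / 2 * (1 - m) ^ a := by
    rw [intervalIntegral.integral_const, sub_zero, smul_eq_mul]
  rw [← hconst]
  refine intervalIntegral.integral_lt_integral_of_continuousOn_of_le_of_exists_lt (by positivity)
    (continuous_one_sub_mul_sin_sq_rpow h1 a).continuousOn continuousOn_const (fun θ _ => ?_)
    ⟨0, left_mem_Icc.2 (by positivity), ?_⟩
  · exact rpow_le_rpow_of_nonpos h1' (by nlinarith [sin_sq_le_one θ]) ha.le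
  · exact rpow_lt_rpow_of_neg h1' (by simpa using h0) ha

theorem continuous_ellipticIntegral {a : ℝ} (ha : 0 ≤ a) : Continuous (ellipticIntegral a) :=
  intervalIntegral.continuous_parametric_intervalIntegral_of_continuous'
    (Continuous.rpow_const (by fun_prop) fun _ => .inr ha) _ _

theorem ellipticIntegral_sub_ellipticIntegral_sub_one (hm : m < 1) (a : ℝ) :
    ellipticIntegral a m - ellipticIntegral (a - 1) m =
      -m * ∫ θ in (0:ℝ)..(π / 2), sin θ ^ 2 * (1 - m * sin θ ^ 2) ^ (a - 1) := by
  have hint (b : ℝ) := intervalIntegrable_one_sub_mul_sin_sq_rpow hm b 0 (π / 2)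
  rw [ellipticIntegral, ellipticIntegral, ← intervalIntegral.integral_sub (hint _) (hint _),
    ← intervalIntegral.integral_const_mul]
  refine intervalIntegral.integral_congr fun θ _ => ?_
  have hpos := one_sub_mul_sin_sq_pos hm θ
  simp only [rpow_sub_one hpos.ne']
  field_simp
  ring

theorem abs_ellipticIntegral_sub_ellipticIntegral_sub_one_le (hm : m < 1) (a : ℝ) :
    |ellipticIntegral a m - ellipticIntegral (a - 1) m| ≤ |m| * ellipticIntegral (a - 1) m := by
  have hcont := continuous_one_sub_mul_sin_sq_rpow hm (a - 1)
  have hpow (θ : ℝ) : 0 ≤ (1 - m * sin θ ^ 2) ^ (a - 1) :=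
    rpow_nonneg (one_sub_mul_sin_sq_pos hm θ).le _
  rw [ellipticIntegral_sub_ellipticIntegral_sub_one hm, abs_mul, abs_neg,
    abs_of_nonneg (intervalIntegral.integral_nonneg (by positivity) fun θ _ =>
      mul_nonneg (sq_nonneg _) (hpow θ))]
  gcongr
  exact intervalIntegral.integral_mono_on (by positivity)
    (Continuous.intervalIntegrable (by fun_prop) _ _) (hcont.intervalIntegrable _ _)
    fun θ _ => mul_le_of_le_one_left (hpow θ) (sin_sq_le_one θ)

theorem hasDerivAt_ellipticIntegral (hm : m < 1) (a : ℝ) :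
    HasDerivAt (ellipticIntegral a)
      (-a * ∫ θ in (0:ℝ)..(π / 2), sin θ ^ 2 * (1 - m * sin θ ^ 2) ^ (a - 1)) m := by
  rw [← intervalIntegral.integral_const_mul]
  refine hasDerivAt_intervalIntegral_of_continuousOn (s := Iio 1)
    (f := fun m θ => (1 - m * sin θ ^ 2) ^ a)
    (f' := fun m θ => -a * (sin θ ^ 2 * (1 - m * sin θ ^ 2) ^ (a - 1))) isOpen_Iio
    (fun x hx => (continuous_one_sub_mul_sin_sq_rpow hx a).continuousOn) ?_ ?_ hm
  · have hpow : ContinuousOn (fun p : ℝ × ℝ => (1 - p.1 * sin p.2 ^ 2) ^ (a - 1))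
        (Iio 1 ×ˢ uIcc 0 (π / 2)) :=
      ContinuousOn.rpow_const (by fun_prop) fun p hp => .inl (one_sub_mul_sin_sq_pos hp.1 p.2).ne'
    exact continuousOn_const.mul (ContinuousOn.mul (by fun_prop) hpow)
  · intro x hx θ _
    have hbase : HasDerivAt (fun y => 1 - y * sin θ ^ 2) (-(1 * sin θ ^ 2)) x :=
      ((hasDerivAt_id x).mul_const _).const_sub 1
    refine (hbase.rpow_const (.inl (one_sub_mul_sin_sq_pos hx θ).ne')).congr_deriv ?_
    ring

theorem hasDerivAt_ellipticIntegral_of_ne_zero (h0 : m ≠ 0) (h1 : m < 1) (a : ℝ) :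
    HasDerivAt (ellipticIntegral a)
      (a * (ellipticIntegral a m - ellipticIntegral (a - 1) m) / m) m := by
  refine (hasDerivAt_ellipticIntegral h1 a).congr_deriv ?_
  rw [ellipticIntegral_sub_ellipticIntegral_sub_one h1, mul_left_comm, neg_mul, neg_mul, neg_div,
    mul_div_cancel_left₀ _ h0]

theorem hasDerivAt_mul_sin_mul_cos_mul_rpow (hm : m < 1) (a θ : ℝ) :
    HasDerivAt (fun θ => m * (sin θ * cos θ * (1 - m * sin θ ^ 2) ^ a))
      (2 * (a + 1) * (1 - m * sin θ ^ 2) ^ (a + 1)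
        - (2 * a + 1) * (2 - m) * (1 - m * sin θ ^ 2) ^ a
        + 2 * a * (1 - m) * (1 - m * sin θ ^ 2) ^ (a - 1)) θ := by
  have hpos := one_sub_mul_sin_sq_pos hm θ
  have hbase : HasDerivAt (fun θ => 1 - m * sin θ ^ 2) (-(m * (2 * sin θ * cos θ))) θ := by
    simpa using (((hasDerivAt_sin θ).pow 2).const_mul m).const_sub 1
  refine ((((hasDerivAt_sin θ).mul (hasDerivAt_cos θ)).mul
    (hbase.rpow_const (p := a) (.inl hpos.ne'))).const_mul m).congr_deriv ?_
  have hcos := cos_sq' θ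
  simp only [Pi.mul_apply, rpow_add_one hpos.ne', rpow_sub_one hpos.ne']
  field_simp
  rw [hcos]
  ring

theorem ellipticIntegral_recurrence (hm : m < 1) (a : ℝ) :
    2 * (a + 1) * ellipticIntegral (a + 1) m - (2 * a + 1) * (2 - m) * ellipticIntegral a m
      + 2 * a * (1 - m) * ellipticIntegral (a - 1) m = 0 := by
  have hint (c b : ℝ) : IntervalIntegrable (fun θ => c * (1 - m * sin θ ^ 2) ^ b)
      volume 0 (π / 2) :=
    (intervalIntegrable_one_sub_mul_sin_sq_rpow hm b _ _).const_mul c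
  have hFTC := intervalIntegral.integral_eq_sub_of_hasDerivAt (a := 0) (b := π / 2)
    (fun θ _ => hasDerivAt_mul_sin_mul_cos_mul_rpow hm a θ)
    (((hint _ _).sub (hint _ _)).add (hint _ _))
  rw [intervalIntegral.integral_add ((hint _ _).sub (hint _ _)) (hint _ _),
    intervalIntegral.integral_sub (hint _ _) (hint _ _)] at hFTC
  simpa [ellipticIntegral] using hFTC

end EllipticIntegral

section FirstAndSecondKind

variable {m : ℝ}

theorem ellipticK_zero : ellipticK 0 = π / 2 := ellipticIntegral_zero_right _

theorem ellipticE_one : ellipticE 1 = 1 := by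
  have hcos : ellipticE 1 = ∫ θ in (0:ℝ)..(π / 2), cos θ := by
    refine intervalIntegral.integral_congr fun θ hθ => ?_
    rw [uIcc_of_le (by positivity)] at hθ
    have hcos_nonneg : 0 ≤ cos θ := cos_nonneg_of_mem_Icc ⟨by linarith [hθ.1, pi_pos], hθ.2⟩
    simp only [one_mul, ← cos_sq', ← sqrt_eq_rpow, sqrt_sq hcos_nonneg]
  simp [hcos]

theorem continuous_ellipticE : Continuous ellipticE := continuous_ellipticIntegral (by norm_num)

theorem continuousAt_ellipticK (hm : m < 1) : ContinuousAt ellipticK m :=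
  (hasDerivAt_ellipticIntegral hm _).continuousAt

theorem ellipticK_pos (hm : m < 1) : 0 < ellipticK m := ellipticIntegral_pos hm _

theorem ellipticK_lt (h0 : 0 < m) (h1 : m < 1) : ellipticK m < π / 2 / √(1 - m) := by
  have h := ellipticIntegral_lt (a := -1 / 2) (by norm_num) h0 h1
  rwa [neg_div, rpow_neg (sub_pos.2 h1).le, ← sqrt_eq_rpow, ← div_eq_mul_inv, ← neg_div] at h

theorem one_sub_mul_ellipticK_sq_lt (h0 : 0 < m) (h1 : m < 1) :
    (1 - m) * ellipticK m ^ 2 < (π / 2) ^ 2 := by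
  have h1' : 0 < 1 - m := sub_pos.2 h1
  have hlt := (lt_div_iff₀ (sqrt_pos.2 h1')).1 (ellipticK_lt h0 h1)
  calc (1 - m) * ellipticK m ^ 2 = (ellipticK m * √(1 - m)) ^ 2 := by
        rw [mul_pow, sq_sqrt h1'.le, mul_comm]
    _ < (π / 2) ^ 2 := pow_lt_pow_left₀ hlt
        (mul_nonneg (ellipticK_pos h1).le (sqrt_nonneg _)) two_ne_zero

theorem abs_ellipticE_sub_ellipticK_le (hm : m < 1) :
    |ellipticE m - ellipticK m| ≤ |m| * ellipticK m := by
  have h := abs_ellipticIntegral_sub_ellipticIntegral_sub_one_le hm (1 / 2)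
  rwa [show (1 / 2 - 1 : ℝ) = -1 / 2 by norm_num] at h

theorem hasDerivAt_ellipticE (h0 : m ≠ 0) (h1 : m < 1) :
    HasDerivAt ellipticE ((ellipticE m - ellipticK m) / (2 * m)) m := by
  refine (hasDerivAt_ellipticIntegral_of_ne_zero h0 h1 (1 / 2)).congr_deriv ?_
  rw [ellipticE, ellipticK, show (1 / 2 - 1 : ℝ) = -1 / 2 by norm_num]
  field_simp

theorem hasDerivAt_ellipticK (h0 : m ≠ 0) (h1 : m < 1) :
    HasDerivAt ellipticK ((ellipticE m - (1 - m) * ellipticK m) / (2 * m * (1 - m))) m := by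
  have h1' : 1 - m ≠ 0 := (sub_pos.2 h1).ne'
  have hrec := ellipticIntegral_recurrence h1 (-1 / 2)
  rw [show (-1 / 2 + 1 : ℝ) = 1 / 2 by norm_num] at hrec
  refine (hasDerivAt_ellipticIntegral_of_ne_zero h0 h1 (-1 / 2)).congr_deriv ?_
  rw [ellipticE, ellipticK]
  generalize ellipticIntegral (-1 / 2 - 1) m = F at hrec ⊢
  field_simp
  linear_combination -hrec

end FirstAndSecondKind

section LegendreRelation

variable {m : ℝ}

/-- The left-hand side `E K' + E' K - K K'` of Legendre's relation, as a function of the parameter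
`m = r²`. It is grouped so that the first summand vanishes in the limit `m → 0`. -/
noncomputable def legendreExpr (m : ℝ) : ℝ :=
  (ellipticE m - ellipticK m) * ellipticK (1 - m) + ellipticE (1 - m) * ellipticK m

theorem hasDerivAt_legendreExpr (h0 : 0 < m) (h1 : m < 1) : HasDerivAt legendreExpr 0 m := by
  have h1' : 0 < 1 - m := sub_pos.2 h1
  have hK := hasDerivAt_ellipticK h0.ne' h1
  have hE := hasDerivAt_ellipticE h0.ne' h1
  have hK' := (hasDerivAt_ellipticK h1'.ne' (sub_lt_self 1 h0)).comp_const_sub 1 m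
  have hE' := (hasDerivAt_ellipticE h1'.ne' (sub_lt_self 1 h0)).comp_const_sub 1 m
  refine (((hE.sub hK).mul hK').add (hE'.mul hK)).congr_deriv ?_
  simp only [Pi.sub_apply, sub_sub_cancel]
  field_simp
  ring

theorem abs_ellipticE_sub_ellipticK_mul_ellipticK_one_sub_le (h0 : 0 < m) (h1 : m < 1) :
    |(ellipticE m - ellipticK m) * ellipticK (1 - m)| ≤ √m * (π / 2 * ellipticK m) := by
  have hK' : ellipticK (1 - m) < π / 2 / √m := by
    simpa only [sub_sub_cancel] using ellipticK_lt (sub_pos.2 h1) (sub_lt_self 1 h0)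
  have hK'_pos : 0 < ellipticK (1 - m) := ellipticK_pos (sub_lt_self 1 h0)
  have hK_pos : 0 < ellipticK m := ellipticK_pos h1
  calc |(ellipticE m - ellipticK m) * ellipticK (1 - m)|
      = |ellipticE m - ellipticK m| * ellipticK (1 - m) := by rw [abs_mul, abs_of_pos hK'_pos]
    _ ≤ |m| * ellipticK m * (π / 2 / √m) := by
        gcongr
        exact abs_ellipticE_sub_ellipticK_le h1
    _ = m / √m * (π / 2 * ellipticK m) := by rw [abs_of_pos h0]; ring
    _ = √m * (π / 2 * ellipticK m) := by rw [div_sqrt]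

theorem tendsto_legendreExpr_nhdsGT_zero : Tendsto legendreExpr (𝓝[>] 0) (𝓝 (π / 2)) := by
  have hK : Tendsto ellipticK (𝓝[>] 0) (𝓝 (π / 2)) := by
    simpa only [ellipticK_zero] using
      (continuousAt_ellipticK one_pos).tendsto.mono_left nhdsWithin_le_nhds
  have hE' : Tendsto (fun m => ellipticE (1 - m)) (𝓝[>] 0) (𝓝 1) :=
    ((continuous_ellipticE.comp (continuous_const.sub continuous_id)).tendsto' 0 1
      (by simp [ellipticE_one])).mono_left nhdsWithin_le_nhds
  have hsqrt : Tendsto sqrt (𝓝[>] 0) (𝓝 0) :=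
    (continuous_sqrt.tendsto' 0 0 sqrt_zero).mono_left nhdsWithin_le_nhds
  have hmajorant : Tendsto (fun m => √m * (π / 2 * ellipticK m)) (𝓝[>] 0) (𝓝 0) := by
    simpa using hsqrt.mul (hK.const_mul (π / 2))
  have hfirst : Tendsto (fun m => (ellipticE m - ellipticK m) * ellipticK (1 - m)) (𝓝[>] 0)
      (𝓝 0) := by
    refine squeeze_zero_norm' ?_ hmajorant
    filter_upwards [Ioo_mem_nhdsGT one_pos] with m hm using
      abs_ellipticE_sub_ellipticK_mul_ellipticK_one_sub_le hm.1 hm.2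
  have hsum := hfirst.add (hE'.mul hK)
  rwa [zero_add, one_mul] at hsum

theorem legendreExpr_eq (h0 : 0 < m) (h1 : m < 1) : legendreExpr m = π / 2 := by
  have hconst : ∀ x ∈ Ioo (0:ℝ) 1, legendreExpr m = legendreExpr x := fun x hx =>
    isOpen_Ioo.is_const_of_deriv_eq_zero isPreconnected_Ioo
      (fun y hy => (hasDerivAt_legendreExpr hy.1 hy.2).differentiableAt.differentiableWithinAt)
      (fun y hy => (hasDerivAt_legendreExpr hy.1 hy.2).deriv) ⟨h0, h1⟩ hx
  refine tendsto_nhds_unique (tendsto_const_nhds.congr' ?_) tendsto_legendreExpr_nhdsGT_zero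
  filter_upwards [Ioo_mem_nhdsGT one_pos] with x hx using hconst x hx

theorem hasDerivAt_ellipticK_one_sub_div_ellipticK (h0 : 0 < m) (h1 : m < 1) :
    HasDerivAt (fun m => ellipticK (1 - m) / ellipticK m)
      (-π / (4 * m * (1 - m) * ellipticK m ^ 2)) m := by
  have h1' : 0 < 1 - m := sub_pos.2 h1
  have hpos : 0 < ellipticK m := ellipticK_pos h1
  have hK := hasDerivAt_ellipticK h0.ne' h1
  have hK' := (hasDerivAt_ellipticK h1'.ne' (sub_lt_self 1 h0)).comp_const_sub 1 m
  have hLegendre := legendreExpr_eq h0 h1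
  rw [legendreExpr] at hLegendre
  refine (hK'.div hK hpos.ne').congr_deriv ?_
  simp only [sub_sub_cancel]
  field_simp
  linear_combination (-4) * hLegendre

end LegendreRelation

section GrotzschModulus

variable {r : ℝ}

theorem ellK_eq_ellipticK (hr : r ^ 2 ≤ 1) : ellK r = ellipticK (r ^ 2) := by
  refine intervalIntegral.integral_congr fun θ _ => ?_
  have hnonneg : 0 ≤ 1 - r ^ 2 * sin θ ^ 2 :=
    sub_nonneg.2 (mul_le_one₀ hr (sq_nonneg _) (sin_sq_le_one θ))
  simp only [neg_div, rpow_neg hnonneg, sqrt_eq_rpow, one_div]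

theorem ellK_pos (hr : r ^ 2 < 1) : 0 < ellK r :=
  (ellipticK_pos hr).trans_eq (ellK_eq_ellipticK hr.le).symm

theorem one_sub_sq_mul_ellK_sq_lt (h0 : r ≠ 0) (h1 : r ^ 2 < 1) :
    (1 - r ^ 2) * ellK r ^ 2 < (π / 2) ^ 2 := by
  rw [ellK_eq_ellipticK h1.le]
  exact one_sub_mul_ellipticK_sq_lt (by positivity) h1

theorem mu_eq_ellipticK_div (hr : r ^ 2 ≤ 1) :
    mu r = π / 2 * (ellipticK (1 - r ^ 2) / ellipticK (r ^ 2)) := by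
  have hsq : √(1 - r ^ 2) ^ 2 = 1 - r ^ 2 := sq_sqrt (sub_nonneg.2 hr)
  have hsq_le : √(1 - r ^ 2) ^ 2 ≤ 1 := hsq.trans_le (sub_le_self 1 (sq_nonneg r))
  rw [mu, ellK_eq_ellipticK hr, ellK_eq_ellipticK hsq_le, hsq, mul_div_assoc]

theorem hasDerivAt_mu (h0 : 0 < r) (h1 : r < 1) :
    HasDerivAt mu (-π ^ 2 / (4 * r * (1 - r ^ 2) * ellK r ^ 2)) r := by
  have hsq_lt : r ^ 2 < 1 := pow_lt_one₀ h0.le h1 two_ne_zero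
  have hmu : mu =ᶠ[𝓝 r] fun r => π / 2 * (ellipticK (1 - r ^ 2) / ellipticK (r ^ 2)) := by
    filter_upwards [Ioo_mem_nhds h0 h1] with s hs using
      mu_eq_ellipticK_div (pow_le_one₀ hs.1.le hs.2.le)
  have hratio := (hasDerivAt_ellipticK_one_sub_div_ellipticK (pow_pos h0 2) hsq_lt).comp
    (h := fun r => r ^ 2) r (hasDerivAt_pow 2 r)
  refine ((hratio.const_mul (π / 2)).congr_of_eventuallyEq hmu).congr_deriv ?_
  rw [ellK_eq_ellipticK hsq_lt.le]
  have hpos : 0 < ellipticK (r ^ 2) := ellipticK_pos hsq_lt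
  have h1' : 0 < 1 - r ^ 2 := sub_pos.2 hsq_lt
  field_simp
  ring

theorem hasDerivAt_mu_add_log (h0 : 0 < r) (h1 : r < 1) :
    HasDerivAt (fun r => mu r + log r)
      (((1 - r ^ 2) * ellK r ^ 2 - (π / 2) ^ 2) / (r * ((1 - r ^ 2) * ellK r ^ 2))) r := by
  have hsq_lt : r ^ 2 < 1 := pow_lt_one₀ h0.le h1 two_ne_zero
  have h1' : 0 < 1 - r ^ 2 := sub_pos.2 hsq_lt
  have hK_pos : 0 < ellK r := ellK_pos hsq_lt
  refine ((hasDerivAt_mu h0 h1).add (hasDerivAt_log h0.ne')).congr_deriv ?_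
  field_simp
  ring

end GrotzschModulus

theorem mu_add_log_strictAnti :
    StrictAntiOn (fun r => mu r + Real.log r) (Set.Ioo (0:ℝ) 1) := by
  refine strictAntiOn_of_deriv_neg (convex_Ioo 0 1)
    (fun r hr => (hasDerivAt_mu_add_log hr.1 hr.2).continuousAt.continuousWithinAt) fun r hr => ?_
  rw [interior_Ioo] at hr
  obtain ⟨h0, h1⟩ := hr
  have hsq_lt : r ^ 2 < 1 := pow_lt_one₀ h0.le h1 two_ne_zero
  have hdenom : 0 < r * ((1 - r ^ 2) * ellK r ^ 2) :=
    mul_pos h0 (mul_pos (sub_pos.2 hsq_lt) (pow_pos (ellK_pos hsq_lt) 2))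
  rw [(hasDerivAt_mu_add_log h0 h1).deriv]
  exact div_neg_of_neg_of_pos (sub_neg.2 (one_sub_sq_mul_ellK_sq_lt h0.ne' hsq_lt)) hdenom
end

section
/- For r in (0,1), with α = r² and β = φ_{1/7}(r)², one has (αβ)^{1/8} + ((1−α)(1−β))^{1/8} = 1. -/
noncomputable def muInv (y : ℝ) : ℝ := Function.invFunOn mu (Set.Ioo 0 1) y

noncomputable def phi (K r : ℝ) : ℝ :=
  if r = 0 then 0 else if r = 1 then 1 else muInv (mu r / K)

/-!
Put `m = K(√α) / K(√β)`, where `β` has degree seven over `α`. On the curve of pairs `(α, β)` the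
function `t = (αβ)^{1/8}` is a parameter: `m` is the positive root of `m² - 2 T(t) m - 7 = 0` with
`T(t) = (2t - 1)(3 - 2t + 2t²)`, and `α`, `β` are polynomials in `t` and `m`.

That these `α`, `β` do satisfy `K(√α) = m K(√β)` is seen from Jacobi's transformation
`1 - y = (1 - x) P(-x)² / V(x²)`, where `P` is a cubic with coefficients polynomial in `t` and `m`:
it carries `dy / √((1 - y²)(1 - αy²))` to `m dx / √((1 - x²)(1 - βx²))`. The factorization of
`1 - αy²` comes from that of `1 - y²` through the involution `x² ↦ 1 / (βx²)`.

The substitution `t ↦ 1 - t` exchanges `(α, β)` and `(1 - β, 1 - α)` and turns `m` into `7 / m`.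
Hence `μ(√β) = 7 μ(√α)`, and `αβ = t⁸` becomes `(1 - α)(1 - β) = (1 - t)⁸`, so that the two eighth
roots are `t` and `1 - t`.
-/

open Set intervalIntegral

section EllipticIntegral

/-- The incomplete elliptic integral of the first kind with amplitude `u`, as a function of the
parameter `a`, the square of the modulus. -/
noncomputable def ellipticF (a u : ℝ) : ℝ :=
  ∫ θ in (0 : ℝ)..u, 1 / Real.sqrt (1 - a * Real.sin θ ^ 2)

/-- The complete elliptic integral of the first kind as a function of the parameter `a`, the square
of the modulus. -/
noncomputable def ellKParam (a : ℝ) : ℝ := ellipticF a (Real.pi / 2)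

theorem ellK_eq_ellKParam (r : ℝ) : ellK r = ellKParam (r ^ 2) := rfl

theorem one_sub_mul_sin_sq_pos_s14 {a : ℝ} (ha : a < 1) (θ : ℝ) : 0 < 1 - a * Real.sin θ ^ 2 := by
  have hle := Real.sin_sq_le_one θ
  rcases le_or_gt a 0 with h | h <;> nlinarith [sq_nonneg (Real.sin θ)]

theorem continuous_ellipticF_integrand {a : ℝ} (ha : a < 1) :
    Continuous fun θ : ℝ => 1 / Real.sqrt (1 - a * Real.sin θ ^ 2) :=
  continuous_const.div (by fun_prop) fun θ => (Real.sqrt_pos.2 (one_sub_mul_sin_sq_pos_s14 ha θ)).ne'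

theorem hasDerivAt_ellipticF {a : ℝ} (ha : a < 1) (u : ℝ) :
    HasDerivAt (ellipticF a) (1 / Real.sqrt (1 - a * Real.sin u ^ 2)) u :=
  ((continuous_ellipticF_integrand ha).integral_hasStrictDerivAt 0 u).hasDerivAt

theorem continuous_ellipticF {a : ℝ} (ha : a < 1) : Continuous (ellipticF a) :=
  continuous_iff_continuousAt.2 fun u => (hasDerivAt_ellipticF ha u).continuousAt

theorem ellKParam_pos {a : ℝ} (ha : a < 1) : 0 < ellKParam a :=
  intervalIntegral_pos_of_pos ((continuous_ellipticF_integrand ha).intervalIntegrable _ _)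
    (fun θ => one_div_pos.2 (Real.sqrt_pos.2 (one_sub_mul_sin_sq_pos_s14 ha θ))) Real.pi_div_two_pos

theorem ellKParam_strictMonoOn : StrictMonoOn ellKParam (Iio 1) := by
  intro a ha b hb hab
  refine integral_lt_integral_of_continuousOn_of_le_of_exists_lt Real.pi_div_two_pos
    (continuous_ellipticF_integrand ha).continuousOn
    (continuous_ellipticF_integrand hb).continuousOn (fun θ _ => ?_)
    ⟨Real.pi / 2, ⟨Real.pi_div_two_pos.le, le_rfl⟩, ?_⟩
  · have := Real.sqrt_pos.2 (one_sub_mul_sin_sq_pos_s14 hb θ)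
    gcongr
  · refine one_div_lt_one_div_of_lt (Real.sqrt_pos.2 (one_sub_mul_sin_sq_pos_s14 hb _))
      (Real.sqrt_lt_sqrt (one_sub_mul_sin_sq_pos_s14 hb _).le ?_)
    simpa only [Real.sin_pi_div_two, one_pow, mul_one] using sub_lt_sub_left hab 1

theorem sin_mem_Ioo_zero_one {θ : ℝ} (hθ : θ ∈ Ioo 0 (Real.pi / 2)) :
    Real.sin θ ∈ Ioo (0 : ℝ) 1 := by
  have hcos := Real.cos_pos_of_mem_Ioo ⟨by linarith [hθ.1, hθ.2], hθ.2⟩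
  refine ⟨Real.sin_pos_of_pos_of_lt_pi hθ.1 (by linarith [hθ.2, Real.pi_pos]), ?_⟩
  nlinarith [Real.sin_sq_add_cos_sq θ, Real.sin_le_one θ]

/-- The last three hypotheses say that
`dy / √((1 - y²)(1 - αy²)) = m dx / √((1 - x²)(1 - βx²))`. -/
theorem hasDerivAt_ellipticF_arcsin_comp_sin {α β m w z θ : ℝ} {y : ℝ → ℝ} (hα : α < 1)
    (hθ : θ ∈ Ioo 0 (Real.pi / 2)) (hw : 0 < w) (hz : 0 < z)
    (hderiv : HasDerivAt y (m * w * z) (Real.sin θ))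
    (hyw : 1 - y (Real.sin θ) ^ 2 = (1 - Real.sin θ ^ 2) * w ^ 2)
    (hyz : 1 - α * y (Real.sin θ) ^ 2 = (1 - β * Real.sin θ ^ 2) * z ^ 2) :
    HasDerivAt (fun θ => ellipticF α (Real.arcsin (y (Real.sin θ))))
      (m * (1 / Real.sqrt (1 - β * Real.sin θ ^ 2))) θ := by
  have hcos : 0 < Real.cos θ := Real.cos_pos_of_mem_Ioo ⟨by linarith [hθ.1, hθ.2], hθ.2⟩
  have hcos_sq : 1 - Real.sin θ ^ 2 = Real.cos θ ^ 2 := (Real.cos_sq' θ).symm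
  have hy_sq : y (Real.sin θ) ^ 2 < 1 := by
    have : 0 < 1 - y (Real.sin θ) ^ 2 := by rw [hyw, hcos_sq]; positivity
    linarith
  obtain ⟨hy_gt, hy_lt⟩ := abs_lt.1 (sq_lt_one_iff_abs_lt_one _ |>.1 hy_sq)
  have hinner := hderiv.comp θ (Real.hasDerivAt_sin θ)
  have harcsin := (Real.hasDerivAt_arcsin hy_gt.ne' hy_lt.ne).comp θ hinner
  refine ((hasDerivAt_ellipticF hα _).comp θ harcsin).congr_deriv ?_
  simp only [Function.comp_apply]
  rw [Real.sin_arcsin hy_gt.le hy_lt.le, hyz, hyw, hcos_sq, ← mul_pow,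
    Real.sqrt_sq (mul_pos hcos hw).le, Real.sqrt_mul' _ (sq_nonneg z), Real.sqrt_sq hz.le]
  field_simp

theorem ellKParam_eq_mul_of_transformation {α β m : ℝ} {y w z : ℝ → ℝ} (hα : α < 1) (hβ : β < 1)
    (hcont : ContinuousOn y (Icc 0 1)) (hy_zero : y 0 = 0) (hy_one : y 1 = 1)
    (hw : ∀ x ∈ Ioo (0 : ℝ) 1, 0 < w x) (hz : ∀ x ∈ Ioo (0 : ℝ) 1, 0 < z x)
    (hderiv : ∀ x ∈ Ioo (0 : ℝ) 1, HasDerivAt y (m * w x * z x) x)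
    (hyw : ∀ x ∈ Ioo (0 : ℝ) 1, 1 - y x ^ 2 = (1 - x ^ 2) * w x ^ 2)
    (hyz : ∀ x ∈ Ioo (0 : ℝ) 1, 1 - α * y x ^ 2 = (1 - β * x ^ 2) * z x ^ 2) :
    ellKParam α = m * ellKParam β := by
  have hsin_maps : MapsTo Real.sin (Icc 0 (Real.pi / 2)) (Icc 0 1) := fun θ hθ =>
    ⟨Real.sin_nonneg_of_nonneg_of_le_pi hθ.1 (by linarith [hθ.2, Real.pi_pos]), Real.sin_le_one θ⟩
  have hcont' : ContinuousOn (fun θ => ellipticF α (Real.arcsin (y (Real.sin θ))))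
      (Icc 0 (Real.pi / 2)) :=
    ((continuous_ellipticF hα).comp Real.continuous_arcsin).comp_continuousOn
      (hcont.comp Real.continuous_sin.continuousOn hsin_maps)
  have hFTC := integral_eq_sub_of_hasDerivAt_of_le Real.pi_div_two_pos.le hcont'
    (fun θ hθ =>
      have hx := sin_mem_Ioo_zero_one hθ
      hasDerivAt_ellipticF_arcsin_comp_sin hα hθ (hw _ hx) (hz _ hx) (hderiv _ hx) (hyw _ hx)
        (hyz _ hx))
    (((continuous_ellipticF_integrand hβ).const_mul m).intervalIntegrable _ _)
  have hF_zero : ellipticF α 0 = 0 := integral_same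
  rw [integral_const_mul, Real.sin_pi_div_two, Real.sin_zero, hy_one, hy_zero, Real.arcsin_one,
    Real.arcsin_zero, hF_zero, sub_zero] at hFTC
  exact hFTC.symm

end EllipticIntegral

section Modulus

theorem mu_eq_ellKParam {r : ℝ} (hr : r ^ 2 ≤ 1) :
    mu r = Real.pi / 2 * ellKParam (1 - r ^ 2) / ellKParam (r ^ 2) := by
  rw [mu, ellK_eq_ellKParam, ellK_eq_ellKParam, Real.sq_sqrt (sub_nonneg.2 hr)]

theorem sq_mem_Ioo_zero_one {r : ℝ} (hr : r ∈ Ioo (0 : ℝ) 1) : r ^ 2 ∈ Ioo (0 : ℝ) 1 :=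
  ⟨pow_pos hr.1 2, pow_lt_one₀ hr.1.le hr.2 two_ne_zero⟩

theorem mu_strictAntiOn : StrictAntiOn mu (Ioo 0 1) := by
  intro r hr s hs hrs
  have hr_sq := sq_mem_Ioo_zero_one hr
  have hs_sq := sq_mem_Ioo_zero_one hs
  have hrs_sq : r ^ 2 < s ^ 2 := pow_lt_pow_left₀ hrs hr.1.le two_ne_zero
  have hK := ellKParam_strictMonoOn hr_sq.2 hs_sq.2 hrs_sq
  have hK' := ellKParam_strictMonoOn (Ioo.one_sub_mem hs_sq).2 (Ioo.one_sub_mem hr_sq).2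
    (sub_lt_sub_left hrs_sq 1)
  have hpos := ellKParam_pos hr_sq.2
  have hpos' := ellKParam_pos (Ioo.one_sub_mem hr_sq).2
  rw [mu_eq_ellKParam hr_sq.2.le, mu_eq_ellKParam hs_sq.2.le]
  gcongr

theorem muInv_mu {s : ℝ} (hs : s ∈ Ioo (0 : ℝ) 1) : muInv (mu s) = s :=
  mu_strictAntiOn.injOn.leftInvOn_invFunOn hs

theorem phi_eq_of_mu_eq_div {K r s : ℝ} (hr : r ∈ Ioo (0 : ℝ) 1) (hs : s ∈ Ioo (0 : ℝ) 1)
    (h : mu s = mu r / K) : phi K r = s := by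
  rw [phi, if_neg hr.1.ne', if_neg hr.2.ne, ← h, muInv_mu hs]

theorem mu_eq_mul_mu_of_ellKParam {r s m m' : ℝ} (hr : r ∈ Ioo (0 : ℝ) 1) (hs : s ∈ Ioo (0 : ℝ) 1)
    (hm : ellKParam (r ^ 2) = m * ellKParam (s ^ 2))
    (hm' : ellKParam (1 - s ^ 2) = m' * ellKParam (1 - r ^ 2)) :
    mu s = m * m' * mu r := by
  have hKr := ellKParam_pos (sq_mem_Ioo_zero_one hr).2
  have hKs := ellKParam_pos (sq_mem_Ioo_zero_one hs).2
  rw [mu_eq_ellKParam (sq_mem_Ioo_zero_one hr).2.le, mu_eq_ellKParam (sq_mem_Ioo_zero_one hs).2.le,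
    hm']
  field_simp
  linear_combination m' * ellKParam (1 - r ^ 2) * hm

end Modulus

/-- The coefficients of the cubic `P(x) = 1 + bx + cx² + dx³` defining a transformation `y` of
degree seven by `1 - y = (1 - x) P(-x)² / V(x²)`. -/
structure JacobiCubic where
  b : ℝ
  c : ℝ
  d : ℝ

namespace JacobiCubic

variable (q : JacobiCubic) {t x X : ℝ}

/-- The cubic `P(x)`. -/
def eval (x : ℝ) : ℝ := 1 + q.b * x + q.c * x ^ 2 + q.d * x ^ 3

/-- The polynomial `N(X)` in the numerator of `y = x N(x²) / V(x²)`. -/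
def num (X : ℝ) : ℝ :=
  1 + 2 * q.b + (q.b ^ 2 + 2 * q.c + 2 * q.b * q.c + 2 * q.d) * X
    + (q.c ^ 2 + 2 * q.b * q.d + 2 * q.c * q.d) * X ^ 2 + q.d ^ 2 * X ^ 3

/-- The denominator `V(X)` of `y = x N(x²) / V(x²)`. -/
def den (X : ℝ) : ℝ :=
  1 + (q.b ^ 2 + 2 * q.c + 2 * q.b) * X
    + (q.c ^ 2 + 2 * q.b * q.d + 2 * q.b * q.c + 2 * q.d) * X ^ 2
    + (q.d ^ 2 + 2 * q.c * q.d) * X ^ 3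

/-- The norm of `P` over the even polynomials: the `W` with `W(x²) = P(x) P(-x)`. -/
def norm (X : ℝ) : ℝ :=
  1 + (2 * q.c - q.b ^ 2) * X + (q.c ^ 2 - 2 * q.b * q.d) * X ^ 2 - q.d ^ 2 * X ^ 3

/-- The polynomial `R` with `y'(x) = W(x²) R(x²) / V(x²)²`. -/
def cofactor (X : ℝ) : ℝ :=
  1 + 2 * q.b + (2 * q.c - q.b ^ 2 + 2 * (3 * q.d - q.b * q.c) - 2 * q.b) * X
    + (q.c ^ 2 - 2 * q.b * q.d + 2 * q.c * q.d - 2 * (3 * q.d - q.b * q.c)) * X ^ 2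
    - (q.d ^ 2 + 2 * q.c * q.d) * X ^ 3

/-- The odd rational function `y = x N(x²) / V(x²)` of degree seven. -/
noncomputable def transform (x : ℝ) : ℝ := x * q.num (x ^ 2) / q.den (x ^ 2)

theorem norm_apply_sq (x : ℝ) : q.norm (x ^ 2) = q.eval x * q.eval (-x) := by
  simp only [norm, eval]; ring

theorem den_sq_sub_mul_num_sq (X : ℝ) :
    q.den X ^ 2 - X * q.num X ^ 2 = (1 - X) * q.norm X ^ 2 := by
  simp only [den, num, norm]; ring

theorem transform_zero : q.transform 0 = 0 := by simp [transform]

theorem one_sub_transform (hden : q.den (x ^ 2) ≠ 0) :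
    1 - q.transform x = (1 - x) * q.eval (-x) ^ 2 / q.den (x ^ 2) := by
  rw [transform, one_sub_div hden]
  simp only [den, num, eval]
  ring

theorem hasDerivAt_transform (hden : q.den (x ^ 2) ≠ 0) :
    HasDerivAt q.transform (q.norm (x ^ 2) * q.cofactor (x ^ 2) / q.den (x ^ 2) ^ 2) x := by
  have hX : HasDerivAt (fun x : ℝ => x ^ 2) (2 * x) x := by simpa using hasDerivAt_pow 2 x
  have hnum : HasDerivAt (fun x => x * q.num (x ^ 2)) (1 + 2 * q.b
      + 3 * (q.b ^ 2 + 2 * q.c + 2 * q.b * q.c + 2 * q.d) * x ^ 2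
      + 5 * (q.c ^ 2 + 2 * q.b * q.d + 2 * q.c * q.d) * x ^ 4 + 7 * q.d ^ 2 * x ^ 6) x := by
    refine ((hasDerivAt_id x).mul ((((hasDerivAt_const x _).add (hX.const_mul _)).add
      ((hX.pow 2).const_mul _)).add ((hX.pow 3).const_mul _))).congr_deriv ?_
    simp only [Pi.pow_apply, Pi.add_apply, one_mul, id_eq, zero_add, Nat.cast_ofNat,
      Nat.add_one_sub_one, pow_one]
    ring
  have hden' : HasDerivAt (fun x => q.den (x ^ 2)) (2 * (q.b ^ 2 + 2 * q.c + 2 * q.b) * x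
      + 4 * (q.c ^ 2 + 2 * q.b * q.d + 2 * q.b * q.c + 2 * q.d) * x ^ 3
      + 6 * (q.d ^ 2 + 2 * q.c * q.d) * x ^ 5) x := by
    refine ((((hasDerivAt_const x _).add (hX.const_mul _)).add
      ((hX.pow 2).const_mul _)).add ((hX.pow 3).const_mul _)).congr_deriv ?_
    simp only [zero_add, Nat.cast_ofNat, Nat.add_one_sub_one, pow_one]
    ring
  refine (hnum.div hden' hden).congr_deriv ?_
  simp only [num, den, norm, cofactor]
  ring

/-- Conditions under which `V(x²)` and `W(x²)` are positive on `(0, 1)`. -/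
structure IsPositive : Prop where
  b_pos : 0 < q.b
  c_pos : 0 < q.c
  d_pos : 0 < q.d
  eval_neg_pos : ∀ x ∈ Ioo (0 : ℝ) 1, 0 < q.eval (-x)

/-- The relations by which the involution `X ↦ 1 / (βX)`, with `β = t d`, exchanges `N` with `V`
(the first three) and `W` with `R` (the last two), up to monomial factors. -/
structure IsReciprocal (t : ℝ) : Prop where
  den_three : q.d + 2 * q.c = (1 + 2 * q.b) * t ^ 3
  den_two : q.c ^ 2 + 2 * q.b * q.d + 2 * q.b * q.c + 2 * q.d
    = (q.b ^ 2 + 2 * q.c + 2 * q.b * q.c + 2 * q.d) * t ^ 2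
  den_one : q.d * (q.b ^ 2 + 2 * q.c + 2 * q.b) = (q.c ^ 2 + 2 * q.b * q.d + 2 * q.c * q.d) * t
  cofactor_one : q.d * (2 * q.c - q.b ^ 2 + 2 * (3 * q.d - q.b * q.c) - 2 * q.b)
    = -((1 + 2 * q.b) * (q.c ^ 2 - 2 * q.b * q.d) * t)
  cofactor_two : q.c ^ 2 - 2 * q.b * q.d + 2 * q.c * q.d - 2 * (3 * q.d - q.b * q.c)
    = -((1 + 2 * q.b) * (2 * q.c - q.b ^ 2) * t ^ 2)

variable {q}

theorem IsPositive.den_pos (hq : q.IsPositive) (hX : 0 ≤ X) : 0 < q.den X := by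
  obtain ⟨hb, hc, hd, -⟩ := hq
  rw [den]; positivity

theorem IsPositive.norm_apply_sq_pos (hq : q.IsPositive) (hx : x ∈ Ioo (0 : ℝ) 1) :
    0 < q.norm (x ^ 2) := by
  obtain ⟨hb, hc, hd, hneg⟩ := hq
  have hx_pos := hx.1
  rw [norm_apply_sq]
  exact mul_pos (by rw [eval]; positivity) (hneg x hx)

theorem IsPositive.transform_one (hq : q.IsPositive) : q.transform 1 = 1 := by
  have hdiff := q.one_sub_transform (hq.den_pos (sq_nonneg 1)).ne'
  rw [sub_self, zero_mul, zero_div] at hdiff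
  exact (sub_eq_zero.1 hdiff).symm

theorem IsReciprocal.num_inv (h : q.IsReciprocal t) (ht : t ≠ 0) (hd : q.d ≠ 0) (hX : X ≠ 0) :
    q.num (1 / (t * q.d * X)) = q.den X / (t ^ 3 * q.d * X ^ 3) := by
  simp only [num, den]
  field_simp
  linear_combination -X ^ 3 * q.d ^ 2 * h.den_three - q.d * X ^ 2 * h.den_two - X * h.den_one

theorem IsReciprocal.den_inv (h : q.IsReciprocal t) (ht : t ≠ 0) (hd : q.d ≠ 0) (hX : X ≠ 0) :
    q.den (1 / (t * q.d * X)) = q.num X / (q.d ^ 2 * X ^ 3) := by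
  simp only [num, den]
  field_simp
  linear_combination h.den_three + t * X * h.den_two + t ^ 2 * X ^ 2 * h.den_one

theorem IsReciprocal.norm_inv (h : q.IsReciprocal t) (ht : t ≠ 0) (hd : q.d ≠ 0) (hX : X ≠ 0) :
    (1 + 2 * q.b) * q.norm (1 / (t * q.d * X)) = -q.cofactor X / (t ^ 3 * q.d * X ^ 3) := by
  simp only [norm, cofactor]
  field_simp
  linear_combination X * h.cofactor_one + q.d * X ^ 2 * h.cofactor_two
    - q.d ^ 2 * X ^ 3 * h.den_three

theorem IsReciprocal.den_sq_sub_div_mul_num_sq (h : q.IsReciprocal t) (ht : t ≠ 0) (hd : q.d ≠ 0)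
    (hX : X ≠ 0) :
    (1 + 2 * q.b) ^ 2 * (q.den X ^ 2 - t ^ 7 / q.d * X * q.num X ^ 2)
      = (1 - t * q.d * X) * q.cofactor X ^ 2 := by
  have hfactor : (1 + 2 * q.b) ^ 2 * (q.den (1 / (t * q.d * X)) ^ 2
      - 1 / (t * q.d * X) * q.num (1 / (t * q.d * X)) ^ 2)
      = (1 - 1 / (t * q.d * X)) * ((1 + 2 * q.b) * q.norm (1 / (t * q.d * X))) ^ 2 := by
    rw [q.den_sq_sub_mul_num_sq]
    ring
  rw [h.norm_inv ht hd hX, h.num_inv ht hd hX, h.den_inv ht hd hX] at hfactor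
  field_simp at hfactor ⊢
  linear_combination -hfactor

/-- At a zero of `R` one would have `y² = 1 / α > 1`. -/
theorem IsReciprocal.cofactor_pos (h : q.IsReciprocal t) (hq : q.IsPositive) (ht : 0 < t)
    (hα : t ^ 7 < q.d) (hX : X ∈ Icc (0 : ℝ) 1) : 0 < q.cofactor X := by
  have hb := hq.b_pos
  have hd := hq.d_pos
  have hzero_pos : 0 < q.cofactor 0 := by
    have hzero : q.cofactor 0 = 1 + 2 * q.b := by simp [cofactor]
    rw [hzero]
    positivity
  have hcont : ContinuousOn q.cofactor (Icc 0 X) := by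
    unfold cofactor
    fun_prop
  by_contra! hneg
  obtain ⟨Y, hY, hzero⟩ := intermediate_value_Icc' hX.1 hcont ⟨hneg, hzero_pos.le⟩
  have hY_pos : 0 < Y := hY.1.lt_of_ne' fun hY_zero => by
    rw [hY_zero] at hzero
    exact hzero_pos.ne' hzero
  have hden : 0 < q.den Y := hq.den_pos hY_pos.le
  have hden_sq : q.den Y ^ 2 = t ^ 7 / q.d * (Y * q.num Y ^ 2) := by
    have hfactor := h.den_sq_sub_div_mul_num_sq ht.ne' hd.ne' hY_pos.ne'
    rw [hzero, zero_pow two_ne_zero, mul_zero, mul_eq_zero_iff_left (by positivity)] at hfactor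
    linear_combination hfactor
  have hnum_le : Y * q.num Y ^ 2 ≤ q.den Y ^ 2 := by
    have : 0 ≤ (1 - Y) * q.norm Y ^ 2 :=
      mul_nonneg (sub_nonneg.2 (hY.2.trans hX.2)) (sq_nonneg _)
    linarith [q.den_sq_sub_mul_num_sq Y]
  have hα_lt : t ^ 7 / q.d < 1 := (div_lt_one hd).2 hα
  have hlt : q.den Y ^ 2 < q.den Y ^ 2 := calc
    q.den Y ^ 2 = t ^ 7 / q.d * (Y * q.num Y ^ 2) := hden_sq
    _ ≤ t ^ 7 / q.d * q.den Y ^ 2 := by gcongr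
    _ < q.den Y ^ 2 := mul_lt_of_lt_one_left (pow_pos hden 2) hα_lt
  exact lt_irrefl _ hlt

theorem IsReciprocal.ellKParam_eq_mul (h : q.IsReciprocal t) (hq : q.IsPositive) (ht : 0 < t)
    (hα : t ^ 7 < q.d) (hβ : t * q.d < 1) :
    ellKParam (t ^ 7 / q.d) = (1 + 2 * q.b) * ellKParam (t * q.d) := by
  have hb := hq.b_pos
  have hd := hq.d_pos
  have hden : ∀ x : ℝ, 0 < q.den (x ^ 2) := fun x => hq.den_pos (sq_nonneg x)
  refine ellKParam_eq_mul_of_transformation (y := q.transform)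
    (w := fun x => q.norm (x ^ 2) / q.den (x ^ 2))
    (z := fun x => q.cofactor (x ^ 2) / ((1 + 2 * q.b) * q.den (x ^ 2)))
    ((div_lt_one hd).2 hα) hβ
    (fun x _ => (q.hasDerivAt_transform (hden x).ne').continuousAt.continuousWithinAt)
    q.transform_zero hq.transform_one ?_ ?_ ?_ ?_ ?_
  · exact fun x hx => div_pos (hq.norm_apply_sq_pos hx) (hden x)
  · intro x hx
    have := h.cofactor_pos hq ht hα (Ioo_subset_Icc_self (sq_mem_Ioo_zero_one hx))
    have := hden x
    positivity
  · intro x _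
    refine (q.hasDerivAt_transform (hden x).ne').congr_deriv ?_
    field_simp
  · intro x _
    have := (hden x).ne'
    simp only [transform]
    field_simp
    linear_combination q.den_sq_sub_mul_num_sq (x ^ 2)
  · intro x hx
    have := (hden x).ne'
    have hfactor := h.den_sq_sub_div_mul_num_sq ht.ne' hd.ne' (pow_pos hx.1 2).ne'
    simp only [transform]
    field_simp at hfactor ⊢
    linear_combination hfactor

end JacobiCubic

section Parametrization

variable {t x : ℝ}

/-- Half the trace `m - 7 / m` of the quadratic equation satisfied by the multiplier `m`. -/
noncomputable def septicHalfTrace (t : ℝ) : ℝ := (2 * t - 1) * (3 - 2 * t + 2 * t ^ 2)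

/-- The multiplier `m = K(√α) / K(√β)` of degree seven as a function of `t = (αβ)^{1/8}`. -/
noncomputable def septicMul (t : ℝ) : ℝ :=
  septicHalfTrace t + Real.sqrt (septicHalfTrace t ^ 2 + 7)

/-- The parameter `β` of degree seven over `α`, as a function of `t = (αβ)^{1/8}`. -/
noncomputable def septicBeta (t : ℝ) : ℝ := t * (1 - (1 - t) * (1 - t + t ^ 2) * septicMul t)

/-- The parameter `α` as a function of `t = (αβ)^{1/8}`. -/
noncomputable def septicAlpha (t : ℝ) : ℝ :=
  t * (1 + (1 - t) * (1 - t + t ^ 2) * septicMul (1 - t))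

/-- The cubic of the transformation of degree seven from `β` to `α`, at `t = (αβ)^{1/8}`. It is
determined by `1 + 2b = m`, `t d = β` and the first reciprocity relation. -/
noncomputable def septicCubic (t : ℝ) : JacobiCubic where
  b := (septicMul t - 1) / 2
  c := (septicMul t * (1 - 2 * t + 2 * t ^ 2) - 1) / 2
  d := 1 - (1 - t) * (1 - t + t ^ 2) * septicMul t

theorem septicHalfTrace_one_sub (t : ℝ) : septicHalfTrace (1 - t) = -septicHalfTrace t := by
  simp only [septicHalfTrace]; ring

theorem septicMul_one_sub (t : ℝ) : septicMul (1 - t) = septicMul t - 2 * septicHalfTrace t := by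
  simp only [septicMul, septicHalfTrace_one_sub, neg_sq]; ring

theorem septicMul_sq (t : ℝ) : septicMul t ^ 2 = 2 * septicHalfTrace t * septicMul t + 7 := by
  have hsqrt := Real.sq_sqrt (show (0 : ℝ) ≤ septicHalfTrace t ^ 2 + 7 by positivity)
  simp only [septicMul]
  linear_combination hsqrt

theorem septicMul_pos (t : ℝ) : 0 < septicMul t := by
  have habs : |septicHalfTrace t| < Real.sqrt (septicHalfTrace t ^ 2 + 7) := by
    rw [← Real.sqrt_sq_eq_abs]
    exact Real.sqrt_lt_sqrt (sq_nonneg _) (by linarith)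
  rw [septicMul]
  linarith [neg_abs_le (septicHalfTrace t)]

theorem septicMul_mul_septicMul_one_sub (t : ℝ) : septicMul t * septicMul (1 - t) = 7 := by
  rw [septicMul_one_sub]
  linear_combination septicMul_sq t

theorem sub_septicMul_mul_add (t x : ℝ) :
    (x - septicMul t) * (x + septicMul (1 - t)) = x ^ 2 - 2 * septicHalfTrace t * x - 7 := by
  rw [septicMul_one_sub]
  linear_combination -septicMul_sq t

theorem lt_septicMul (hx : 0 < x) (h : x ^ 2 < 2 * septicHalfTrace t * x + 7) :
    x < septicMul t := by
  have hpos := septicMul_pos (1 - t)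
  exact sub_neg.1 (neg_of_mul_neg_left (by linarith [sub_septicMul_mul_add t x])
    (add_pos hx hpos).le)

theorem septicMul_lt (hx : 0 < x) (h : 2 * septicHalfTrace t * x + 7 < x ^ 2) :
    septicMul t < x := by
  have hpos := septicMul_pos (1 - t)
  exact sub_pos.1 (pos_of_mul_pos_left (by linarith [sub_septicMul_mul_add t x])
    (add_pos hx hpos).le)

theorem septicAlpha_one_sub (t : ℝ) : septicAlpha (1 - t) = 1 - septicBeta t := by
  simp only [septicAlpha, septicBeta, sub_sub_cancel]; ring

theorem septicBeta_one_sub (t : ℝ) : septicBeta (1 - t) = 1 - septicAlpha t := by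
  simp only [septicAlpha, septicBeta, sub_sub_cancel]; ring

theorem septicAlpha_mul_septicBeta (t : ℝ) : septicAlpha t * septicBeta t = t ^ 8 := by
  have hm := septicMul_sq t
  simp only [septicAlpha, septicBeta, septicMul_one_sub]
  simp only [septicHalfTrace] at hm ⊢
  linear_combination (-(t ^ 2 * ((1 - t) * (1 - t + t ^ 2)) ^ 2)) * hm

theorem one_sub_septicAlpha_mul_one_sub_septicBeta (t : ℝ) :
    (1 - septicAlpha t) * (1 - septicBeta t) = (1 - t) ^ 8 := by
  rw [← septicAlpha_mul_septicBeta, septicAlpha_one_sub, septicBeta_one_sub, mul_comm]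

theorem one_add_two_mul_add_lt_septicMul (ht : t ∈ Ioo (0 : ℝ) 1) :
    1 + 2 * t + 2 * t ^ 2 + t ^ 3 < septicMul t := by
  have ht_pos := ht.1
  apply lt_septicMul (by positivity)
  rw [septicHalfTrace]
  linear_combination 7 * pow_pos ht_pos 6

theorem one_add_four_mul_sq_add_lt_septicMul (ht : t ∈ Ioo (0 : ℝ) 1) :
    1 + 4 * t ^ 2 + 2 * t ^ 3 < septicMul t := by
  have ht_pos := ht.1
  have ht' : 0 < 1 - t := sub_pos.2 ht.2
  have hgap : 0 < t * (1 - t) ^ 2 * (16 * (1 - t) + 4 * t + 16 * t ^ 2 + 12 * t ^ 3) := by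
    positivity
  apply lt_septicMul (by positivity)
  rw [septicHalfTrace]
  linear_combination hgap

theorem septicMul_lt_one_add_two_mul_add (ht : t ∈ Ioo (0 : ℝ) 1) :
    septicMul t < 1 + 2 * t + 2 * t ^ 2 + 2 * t ^ 3 := by
  have ht_pos := ht.1
  have ht' : 0 < 1 - t := sub_pos.2 ht.2
  have hgap : 0 < t ^ 3 * (1 - t) * (8 * (1 - t) + 4 * t + 12 * t ^ 2) := by positivity
  apply septicMul_lt (by positivity)
  rw [septicHalfTrace]
  linear_combination hgap

theorem septicCubic_isReciprocal (t : ℝ) : (septicCubic t).IsReciprocal t := by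
  have hm := septicMul_sq t
  rw [septicHalfTrace] at hm
  constructor <;> simp only [septicCubic] <;> generalize septicMul t = m at hm ⊢
  · ring
  · linear_combination (t ^ 2 / 4 - 1 / 4) * hm
  · linear_combination (1 / 4 - t / 4 - m * (1 / 4 - t / 2 + t ^ 2 / 2 - t ^ 3 / 4)) * hm
  · linear_combination (-3 / 4 + m * (3 / 4 - 5 / 4 * t + 3 / 2 * t ^ 2 - 3 / 4 * t ^ 3)) * hm
  · linear_combination (3 / 4 - t ^ 2 * m / 4) * hm

theorem septicCubic_d_eq (t : ℝ) :
    (septicCubic t).d = septicMul t / 7 * (septicMul t - (1 + 2 * t + 2 * t ^ 2 + t ^ 3)) := by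
  have hm := septicMul_sq t
  simp only [septicCubic, septicHalfTrace] at hm ⊢
  linear_combination (-1 / 7) * hm

theorem septicCubic_d_pos (ht : t ∈ Ioo (0 : ℝ) 1) : 0 < (septicCubic t).d := by
  rw [septicCubic_d_eq]
  exact mul_pos (div_pos (septicMul_pos t) (by norm_num))
    (sub_pos.2 (one_add_two_mul_add_lt_septicMul ht))

theorem septicCubic_c_eq (t : ℝ) : (septicCubic t).c =
    septicMul t / 2 * (1 + 2 * t + 2 * t ^ 2 + 2 * t ^ 3 - septicMul t)
      + 3 * (septicCubic t).d := by
  have hm := septicMul_sq t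
  simp only [septicCubic, septicHalfTrace] at hm ⊢
  linear_combination (1 / 2) * hm

/-- In powers of `1 - x` every coefficient of `P(-x)` is positive, for `0 < t < 1`. -/
theorem septicCubic_eval_neg (t x : ℝ) : (septicCubic t).eval (-x) =
    septicMul t * (1 - t) ^ 3
      + septicMul t / 2 * (septicMul t - (1 + 4 * t ^ 2 + 2 * t ^ 3)) * (1 - x)
      + septicMul t / 2 * (1 + 2 * t + 2 * t ^ 2 + 2 * t ^ 3 - septicMul t) * (1 - x) ^ 2
      + (septicCubic t).d * (1 - x) ^ 3 := by
  have hm := septicMul_sq t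
  simp only [septicCubic, JacobiCubic.eval, septicHalfTrace] at hm ⊢
  linear_combination (-(1 - x) / 2 + (1 - x) ^ 2 / 2) * hm

theorem septicCubic_isPositive (ht : t ∈ Ioo (0 : ℝ) 1) : (septicCubic t).IsPositive := by
  have ht_pos := ht.1
  have ht' : 0 < 1 - t := sub_pos.2 ht.2
  have hm := septicMul_pos t
  have hm_one : 1 < septicMul t := by
    linarith [one_add_two_mul_add_lt_septicMul ht, pow_pos ht_pos 2, pow_pos ht_pos 3]
  have hd := septicCubic_d_pos ht
  have hlin := sub_pos.2 (one_add_four_mul_sq_add_lt_septicMul ht)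
  have hquad := sub_pos.2 (septicMul_lt_one_add_two_mul_add ht)
  refine ⟨half_pos (sub_pos.2 hm_one), ?_, hd, fun x hx => ?_⟩
  · rw [septicCubic_c_eq]
    positivity
  · have hx' : 0 < 1 - x := sub_pos.2 hx.2
    rw [septicCubic_eval_neg]
    positivity

theorem septicBeta_eq (t : ℝ) : septicBeta t = t * (septicCubic t).d := rfl

theorem septicAlpha_eq_div (ht : t ∈ Ioo (0 : ℝ) 1) :
    septicAlpha t = t ^ 7 / (septicCubic t).d := by
  have hd := septicCubic_d_pos ht
  have hαβ := septicAlpha_mul_septicBeta t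
  rw [septicBeta_eq] at hαβ
  rw [eq_div_iff hd.ne']
  apply mul_left_cancel₀ ht.1.ne'
  linear_combination hαβ

theorem septicBeta_pos (ht : t ∈ Ioo (0 : ℝ) 1) : 0 < septicBeta t :=
  mul_pos ht.1 (septicCubic_d_pos ht)

theorem septicAlpha_pos (ht : t ∈ Ioo (0 : ℝ) 1) : 0 < septicAlpha t := by
  rw [septicAlpha_eq_div ht]
  exact div_pos (pow_pos ht.1 7) (septicCubic_d_pos ht)

theorem septicAlpha_mem (ht : t ∈ Ioo (0 : ℝ) 1) : septicAlpha t ∈ Ioo (0 : ℝ) 1 :=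
  ⟨septicAlpha_pos ht, by linarith [septicBeta_pos (Ioo.one_sub_mem ht), septicBeta_one_sub t]⟩

theorem septicBeta_mem (ht : t ∈ Ioo (0 : ℝ) 1) : septicBeta t ∈ Ioo (0 : ℝ) 1 :=
  ⟨septicBeta_pos ht, by linarith [septicAlpha_pos (Ioo.one_sub_mem ht), septicAlpha_one_sub t]⟩

theorem ellKParam_septicAlpha (ht : t ∈ Ioo (0 : ℝ) 1) :
    ellKParam (septicAlpha t) = septicMul t * ellKParam (septicBeta t) := by
  have hα := (septicAlpha_mem ht).2
  rw [septicAlpha_eq_div ht] at hα ⊢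
  have hmul := (septicCubic_isReciprocal t).ellKParam_eq_mul (septicCubic_isPositive ht) ht.1
    ((div_lt_one (septicCubic_d_pos ht)).1 hα) (septicBeta_mem ht).2
  rwa [show 1 + 2 * (septicCubic t).b = septicMul t by simp only [septicCubic]; ring] at hmul

theorem mu_eq_seven_mul_mu {r s : ℝ} (ht : t ∈ Ioo (0 : ℝ) 1) (hr : r ∈ Ioo (0 : ℝ) 1)
    (hs : s ∈ Ioo (0 : ℝ) 1) (hα : r ^ 2 = septicAlpha t) (hβ : s ^ 2 = septicBeta t) :
    mu s = 7 * mu r := by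
  rw [← septicMul_mul_septicMul_one_sub t]
  refine mu_eq_mul_mu_of_ellKParam hr hs ?_ ?_
  · rw [hα, hβ, ellKParam_septicAlpha ht]
  · rw [hα, hβ, ← septicAlpha_one_sub, ← septicBeta_one_sub,
      ellKParam_septicAlpha (Ioo.one_sub_mem ht)]

theorem exists_septicAlpha_eq {a : ℝ} (ha : a ∈ Ioo (0 : ℝ) 1) :
    ∃ t ∈ Ioo (0 : ℝ) 1, septicAlpha t = a := by
  have hcont : ContinuousOn septicAlpha (Icc 0 1) := by
    unfold septicAlpha septicMul septicHalfTrace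
    fun_prop
  have hzero : septicAlpha 0 = 0 := by simp [septicAlpha]
  have hone : septicAlpha 1 = 1 := by simp [septicAlpha]
  exact intermediate_value_Ioo zero_le_one hcont (by rwa [hzero, hone])

theorem exists_septic_parametrization {r : ℝ} (hr : r ∈ Ioo (0 : ℝ) 1) :
    ∃ t ∈ Ioo (0 : ℝ) 1, r ^ 2 = septicAlpha t ∧ phi (1 / 7) r ^ 2 = septicBeta t := by
  obtain ⟨t, ht, hα⟩ := exists_septicAlpha_eq (sq_mem_Ioo_zero_one hr)
  obtain ⟨hβ_pos, hβ_lt⟩ := septicBeta_mem ht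
  have hs : Real.sqrt (septicBeta t) ∈ Ioo (0 : ℝ) 1 :=
    ⟨Real.sqrt_pos.2 hβ_pos, (Real.sqrt_lt' one_pos).2 (by rwa [one_pow])⟩
  have hs_sq := Real.sq_sqrt hβ_pos.le
  have hmu := mu_eq_seven_mul_mu ht hr hs hα.symm hs_sq
  refine ⟨t, ht, hα.symm, ?_⟩
  rw [phi_eq_of_mu_eq_div hr hs (by rw [hmu]; ring), hs_sq]

end Parametrization

theorem modular_equation_order_seven (r : ℝ) (hr : r ∈ Set.Ioo (0:ℝ) 1) :
    (r^2 * (phi (1/7) r)^2) ^ ((1:ℝ)/8) +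
      ((1 - r^2) * (1 - (phi (1/7) r)^2)) ^ ((1:ℝ)/8) = 1 := by
  obtain ⟨t, ht, hα, hβ⟩ := exists_septic_parametrization hr
  have eighth_root : ∀ x : ℝ, 0 ≤ x → (x ^ 8) ^ ((1:ℝ) / 8) = x := fun x hx => by
    simpa only [one_div, Nat.cast_ofNat] using Real.pow_rpow_inv_natCast hx (n := 8) (by norm_num)
  rw [hα, hβ, septicAlpha_mul_septicBeta, one_sub_septicAlpha_mul_one_sub_septicBeta,
    eighth_root t ht.1.le, eighth_root (1 - t) (sub_nonneg.2 ht.2.le)]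
  ring
end
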